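/- arXiv:2309.08518 — 2 statements merged into one kernel-verified Lean document; each statement's English description precedes it below -/
import Mathlib

section
/- Let U be a standard colored immaculate tableau of shape J. For a weak sentence B, there exists a colored immaculate tableau T of shape J and type B with std(T)=U if and only if the flattening B̃ of B is a refinement of the colored descent composition co_A(U). -/
open scoped BigOperators

namespace ColoredImm

variable {A : Type*}

/-- A *weak sentence* over the alphabet `A`: a finite list of words (words may be empty). -/
abbrev Sentence (A : Type*) := List (List A)

/-- A genuine *sentence*: all of its words are nonempty. -/
def IsSentence (I : Sentence A) : Prop := ∀ w ∈ I, w ≠ []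

/-- The size `|I|` of a sentence: its total number of letters. -/
def size (I : Sentence A) : ℕ := (I.map List.length).sum

/-- The word lengths `wℓ(I)` of a sentence. -/
def wl (I : Sentence A) : List ℕ := I.map List.length

/-- The flattening of a weak sentence: delete all empty words. -/
def flattenWS (I : Sentence A) : Sentence A := I.filter (fun w => !w.isEmpty)

/-- `Refines J I` means `J ⪯ I`: the sentence `I` can be obtained by concatenating
some adjacent words of `J` (so `J` is a refinement of `I`, and `I` a coarsening of `J`). -/
def Refines (J I : Sentence A) : Prop :=
  ∃ P : List (Sentence A), (∀ p ∈ P, p ≠ []) ∧ P.flatten = J ∧ P.map List.flatten = I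

/-! ### Fillings and colored immaculate tableaux -/

/-- An integer filling of a diagram, recorded row by row. -/
abbrev Filling := List (List ℕ)

/-- The entry of a filling at box `b = (row, column)` (0-indexed), with default `0`. -/
def entryAt (f : Filling) (b : ℕ × ℕ) : ℕ := (f.getD b.1 []).getD b.2 0

/-- `IsCIT I f`: `f` is a colored immaculate tableau of shape `I`; that is, `f` has the
same shape as the colored composition diagram of `I`, its entries are positive integers
weakly increasing left to right along each row, and the entries in the first column are
strictly increasing from top to bottom. -/
def IsCIT (I : Sentence A) (f : Filling) : Prop :=
  f.map List.length = I.map List.length ∧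
  (∀ row ∈ f, row.Chain' (· ≤ ·)) ∧
  (f.filterMap List.head?).Chain' (· < ·) ∧
  (∀ x ∈ f.flatten, 1 ≤ x)

/-- The colors (letters of `w`) of the boxes of one row whose entry (in `row`) is `v`,
read from left to right. -/
def rowWith (w : List A) (row : List ℕ) (v : ℕ) : List A :=
  ((w.zip row).filter (fun p => p.2 == v)).map Prod.fst

/-- The word of the type of a tableau at value `v`: the colors of all boxes with entry `v`,
read left to right, from the bottom row up to the top row. -/
def typeWord (I : Sentence A) (f : Filling) (v : ℕ) : List A :=
  (((I.zip f).reverse).map (fun p => rowWith p.1 p.2 v)).flatten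

/-- `HasType I f B` : the tableau `f` (of shape `I`) has type the weak sentence `B`,
i.e. for every positive integer `v`, the colors of the boxes of `f` containing `v`
(read left to right, bottom to top) form the `v`-th word of `B`. -/
def HasType (I : Sentence A) (f : Filling) (B : Sentence A) : Prop :=
  ∀ v, 1 ≤ v → typeWord I f v = B.getD (v - 1) []

/-- `K_{J,B}`: the number of colored immaculate tableaux of shape `J` and type `B`. -/
noncomputable def KJB (J B : Sentence A) : ℕ :=
  Set.ncard {f : Filling | IsCIT J f ∧ HasType J f B}

/-! ### Standardization -/

/-- The list of boxes of a filling. -/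
def boxes (f : Filling) : List (ℕ × ℕ) :=
  ((List.range f.length).map
    (fun r => (List.range (f.getD r []).length).map (fun j => (r, j)))).flatten

/-- `beforeB f b b'`: box `b` comes strictly before box `b'` in the type-reading order of `f`
(smaller entries first; among equal entries, lower rows first, and within a row left to right). -/
def beforeB (f : Filling) (b b' : ℕ × ℕ) : Bool :=
  entryAt f b < entryAt f b' ||
    (entryAt f b == entryAt f b' && (b'.1 < b.1 || (b.1 == b'.1 && b.2 < b'.2)))

/-- The standardization of a filling: each box is renumbered (starting from `1`)
according to its position in the type-reading order. -/
def stdFill (f : Filling) : Filling :=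
  (List.range f.length).map (fun r =>
    (List.range (f.getD r []).length).map (fun j =>
      1 + ((boxes f).filter (fun b' => beforeB f b' (r, j))).length))

/-- The number of boxes of a filling. -/
def nBoxes (f : Filling) : ℕ := f.flatten.length

/-- A filling of `n` boxes is standard when its entries are exactly `1, …, n`,
each appearing once. -/
def IsStandardF (f : Filling) : Prop := f.flatten.Perm (List.range' 1 (nBoxes f))

/-! ### Descents and the colored descent composition -/

/-- The (0-indexed) row containing the value `v` in a standard filling. -/
def rowOf (f : Filling) (v : ℕ) : ℕ := f.findIdx (fun row => row.contains v)

/-- The sorted list of descents of a standard filling: those `i` with `1 ≤ i ≤ n-1`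
such that `i+1` lies in a strictly lower row than `i`. -/
def descList (f : Filling) : List ℕ :=
  (List.range' 1 (nBoxes f - 1)).filter (fun i => decide (rowOf f i < rowOf f (i + 1)))

/-- The composition of `n` associated to a set of split positions `d_1 < … < d_k`:
`(d_1, d_2 - d_1, …, n - d_k)`. -/
def compOf (ds : List ℕ) (n : ℕ) : List ℕ :=
  List.zipWith (fun a b => b - a) (0 :: ds) (ds ++ [n])

/-- Split a word into a sentence according to a composition. -/
def splitByComp : List A → List ℕ → List (List A)
  | _, [] => []
  | w, a :: rest => w.take a :: splitByComp (w.drop a) rest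

/-- The color of the box containing the value `v` in a standard filling of shape `I`. -/
def colorOf [Inhabited A] (I : Sentence A) (f : Filling) (v : ℕ) : A :=
  (I.getD (rowOf f v) []).getD ((f.getD (rowOf f v) []).findIdx (fun x => x == v)) default

/-- The maximal word of the colored descent composition of a standard filling of shape `I`:
the colors of its boxes read in the order of their integer entries. -/
def readWord [Inhabited A] (I : Sentence A) (f : Filling) : List A :=
  (List.range (nBoxes f)).map (fun i => colorOf I f (i + 1))

/-- The colored descent composition `co_A(U)` of a standard colored immaculate tableau:
read the colors of the boxes in the order of their entries, starting a new word
immediately after each descent. -/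
def coA [Inhabited A] (I : Sentence A) (f : Filling) : Sentence A :=
  if nBoxes f = 0 then [] else splitByComp (readWord I f) (compOf (descList f) (nBoxes f))

/-- `L_{J,C}`: the number of standard colored immaculate tableaux of shape `J`
with colored descent composition `C`. -/
noncomputable def LJC [Inhabited A] (J C : Sentence A) : ℕ :=
  Set.ncard {f : Filling | IsCIT J f ∧ IsStandardF f ∧ coA J f = C}

/-! ### The colored quasisymmetric functions `QSym_A` -/

/-- A (normal form of a) monomial in the partially commutative variables `x_{a,i}`:
a pair consisting of the list of words `(w_1, …, w_m)` and the list of (strictly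
increasing, positive) second indices `(j_1 < … < j_m)`, representing
`x_{w_1,j_1} ⋯ x_{w_m,j_m}`. -/
abbrev Mono (A : Type*) := List (List A) × List ℕ

/-- A colored quasisymmetric "series": a formal linear combination of monomials,
recorded by its coefficient function.  `QSym_A` itself is the span of the colored
monomial functions `MQ I` inside this space. -/
abbrev QSymA (A : Type*) := Mono A → ℚ

/-- Validity of a monomial normal form: words and indices match up, the indices are
strictly increasing positive integers, and all words are nonempty. -/
def ValidMono (m : Mono A) : Prop :=
  m.1.length = m.2.length ∧ m.2.Chain' (· < ·) ∧ (∀ j ∈ m.2, 1 ≤ j) ∧ ∀ w ∈ m.1, w ≠ []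

open Classical in
/-- The colored monomial quasisymmetric function `M_I`: the sum of all monomials
`x_{w_1,j_1} ⋯ x_{w_m,j_m}` with `j_1 < … < j_m`, where `I = (w_1, …, w_m)`. -/
noncomputable def MQ (I : Sentence A) : QSymA A := fun m =>
  if m.1 = I ∧ ValidMono m then 1 else 0

/-- The largest entry of a filling. -/
def maxEntry (f : Filling) : ℕ := f.flatten.foldr max 0

/-- The monomial `x_T` of a colored immaculate tableau `T = f` of shape `I`:
for `T` of type `B = (u_1, …, u_j)` it is `x_{u_1,1} x_{u_2,2} ⋯ x_{u_j,j}`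
(empty words are skipped). -/
def monoOf (I : Sentence A) (f : Filling) : Mono A :=
  let vs := ((List.range (maxEntry f)).map (· + 1)).filter (fun v => !(typeWord I f v).isEmpty)
  (vs.map (typeWord I f), vs)

/-- The colored dual immaculate function `𝔖*_J = Σ_T x_T`, the sum of the monomials of all
colored immaculate tableaux `T` of shape `J` (its coefficient at a monomial `m` is the
number of such tableaux with `x_T = m`). -/
noncomputable def dualImm (J : Sentence A) : QSymA A := fun m =>
  (Set.ncard {f : Filling | IsCIT J f ∧ monoOf J f = m} : ℚ)

/-- The colored fundamental quasisymmetric function `F_I = Σ_{J ⪯ I} M_J`. -/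
noncomputable def FQ (I : Sentence A) : QSymA A :=
  ∑ᶠ J ∈ {J : Sentence A | Refines J I}, MQ J

/-! ### The colored immaculate descent graph -/

/-- Edges of the colored immaculate descent graph: a directed edge from `I` to `J` (`J ≠ I`)
whenever some standard colored immaculate tableau of shape `I` has colored descent
composition `J`. -/
def IsEdge [Inhabited A] (I J : Sentence A) : Prop := J ≠ I ∧ LJC I J ≠ 0

/-- Directed paths from `I` to `K` in the colored immaculate descent graph, recorded by
their (nonempty) lists of successive vertices; the path `[I]` is the empty path at `I`. -/
def PathsFromTo [Inhabited A] (I K : Sentence A) : Set (List (Sentence A)) :=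
  {p | p.head? = some I ∧ p.getLast? = some K ∧ p.Chain' IsEdge}

/-- The signed weight `(-1)^{ℓ(𝒫)} prod(𝒫)` of a directed path `𝒫`:
`ℓ(𝒫)` is its number of edges and `prod(𝒫)` the product of its edge weights `L_{I,J}`. -/
noncomputable def pathWeight [Inhabited A] (p : List (Sentence A)) : ℚ :=
  ((-1 : ℚ)) ^ (p.length - 1) * ((p.zip p.tail).map (fun e => (LJC e.1 e.2 : ℚ))).prod

/-- `L⁻¹_{I,K} = Σ_𝒫 (-1)^{ℓ(𝒫)} prod(𝒫)`, summed over all directed paths `𝒫`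
from `I` to `K` in the colored immaculate descent graph. -/
noncomputable def Linv [Inhabited A] (I K : Sentence A) : ℚ :=
  ∑ᶠ p ∈ PathsFromTo I K, pathWeight p

/-! ### The colored noncommutative symmetric functions `NSym_A` -/

/-- A formal series over the complete homogeneous basis `{H_I}` of `NSym_A`, recorded by its
coefficient function on (weak) sentences.  `NSym_A` itself consists of the finitely
supported elements supported on genuine sentences; see `InNSym`. -/
abbrev NSymA (A : Type*) := Sentence A → ℚ

/-- Membership in `NSym_A` proper: finitely supported, and supported on genuine sentences. -/
def InNSym (f : NSymA A) : Prop :=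
  (Function.support f).Finite ∧ ∀ I, f I ≠ 0 → IsSentence I

open Classical in
/-- The colored complete homogeneous noncommutative symmetric function
`H_I = H_{w_1} ⋯ H_{w_k}`. -/
noncomputable def Hd (I : Sentence A) : NSymA A := fun J => if J = I then 1 else 0

/-- `H_w` for a single word `w`, with `H_∅ = 1`. -/
noncomputable def Hw (w : List A) : NSymA A := if w.isEmpty then Hd [] else Hd [w]

/-- Multiplication in `NSym_A` (the concatenation product, extended to series):
`H_I · H_J = H_{I ⬝ J}`. -/
def mulN (f g : NSymA A) : NSymA A := fun I =>
  ∑ j ∈ Finset.range (I.length + 1), f (I.take j) * g (I.drop j)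

/-- The duality pairing `⟨·,·⟩ : NSym_A × QSym_A → ℚ`, determined by
`⟨H_I, M_J⟩ = δ_{I,J}`: the `M_I`-coefficient of a quasisymmetric function is its
coefficient on the monomial `x_{w_1,1} x_{w_2,2} ⋯ x_{w_k,k}`. -/
noncomputable def pairNQ (G : NSymA A) (F : QSymA A) : ℚ :=
  ∑ᶠ I ∈ {I : Sentence A | IsSentence I}, G I * F (I, List.range' 1 I.length)

/-- All ways of splitting each word of a list of words into a prefix and a suffix. -/
def splitsOf : List (List A) → List (List (List A) × List (List A))
  | [] => [([], [])]
  | w :: ws =>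
      (((splitsOf ws).map (fun p =>
        (List.range (w.length + 1)).map (fun t => (w.take t :: p.1, w.drop t :: p.2))))).flatten

/-- Restriction of a candidate monomial: keep only the nonempty words together with
their indices. -/
def restrictMono (ws : List (List A)) (js : List ℕ) : Mono A :=
  let ps := (ws.zip js).filter (fun p => !p.1.isEmpty)
  (ps.map Prod.fst, ps.map Prod.snd)

/-- The product of colored quasisymmetric series: the coefficient of a monomial in `F·G`
is the sum, over all ways of writing each of its words as a concatenation of a word of a
monomial of `F` (on the left) and a word of a monomial of `G` (on the right), of the
products of the corresponding coefficients. -/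
def mulQ (F G : QSymA A) : QSymA A := fun m =>
  ((splitsOf m.1).map (fun p => F (restrictMono p.1 m.2) * G (restrictMono p.2 m.2))).sum

/-- The right perp operator `M^⊸` of `M ∈ QSym_A`, the linear operator on `NSym_A`
determined by `⟨M^⊸(H), G⟩ = ⟨H, G·M⟩`; explicitly, for the dual bases `{M_I}` and `{H_I}`,
`M^⊸(H) = Σ_I ⟨H, M_I · M⟩ H_I`. -/
noncomputable def rperp (M : QSymA A) (H : NSymA A) : NSymA A :=
  ∑ᶠ I ∈ {I : Sentence A | IsSentence I}, pairNQ H (mulQ (MQ I) M) • Hd I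

/-- The colored noncommutative Bernstein operator
`𝔹_v = Σ_u Σ_{Q : w(Q^r) = u} (-1)^{ℓ(Q)} H_{v·u} · (Σ_{S ⪰ Q} M_S^⊸)`,
where `Q` runs over all sentences, `u = w(Q^r)` is the concatenation of the words of `Q`
in reverse order, and `S` runs over all coarsenings of `Q`. -/
noncomputable def Bern (v : List A) (f : NSymA A) : NSymA A :=
  ∑ᶠ Q ∈ {Q : Sentence A | IsSentence Q},
    ((-1 : ℚ)) ^ Q.length •
      mulN (Hw (v ++ Q.reverse.flatten))
        (∑ᶠ S ∈ {S : Sentence A | Refines Q S}, rperp (MQ S) f)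

/-- The colored immaculate function `𝔖_J = 𝔹_{v_1} 𝔹_{v_2} ⋯ 𝔹_{v_h}(1)`. -/
noncomputable def ImmS (J : Sentence A) : NSymA A := J.foldr Bern (Hd [])

/-- The colored ribbon function `R_I = Σ_{J ⪰ I} (-1)^{ℓ(J) - ℓ(I)} H_J`. -/
noncomputable def Rib (I : Sentence A) : NSymA A :=
  ∑ᶠ J ∈ {J : Sentence A | Refines I J}, ((-1 : ℚ)) ^ (I.length - J.length) • Hd J

/-- The Pieri relation `J ⊂_w K` for a sentence `J = (v_1, …, v_h)` and a word `w`: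
`K = (u_1, …, u_g)` with `h ≤ g ≤ h+1` (setting `v_{h+1} = ∅`) and `u_j = v_j · q_j`
for words `q_j` (possibly empty) whose reversed concatenation `q_g ⋯ q_1` equals `w`. -/
def PieriRel (J : Sentence A) (w : List A) (K : Sentence A) : Prop :=
  J.length ≤ K.length ∧ K.length ≤ J.length + 1 ∧
  ∃ q : List (List A), q.length = K.length ∧ q.reverse.flatten = w ∧
    ∀ j < K.length, K.getD j [] = J.getD j [] ++ q.getD j []

/-- Right containment of a weak sentence `K` in `J`: same length, and each word of `K` is a
suffix of the corresponding word of `J`. -/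
def RightContained (K J : Sentence A) : Prop :=
  K.length = J.length ∧ ∀ i < J.length, (K.getD i []).IsSuffix (J.getD i [])

/-- The weak sentence `J/_R K`: remove each word of `K` from the right end of the
corresponding word of `J`. -/
def rightQuot (J K : Sentence A) : Sentence A :=
  List.zipWith (fun v u => v.take (v.length - u.length)) J K

/-- Left containment `J ⊆_L I`: `ℓ(J) ≤ ℓ(I)` and each word of `J` is a prefix of the
corresponding word of `I`. -/
def LeftContained (J I : Sentence A) : Prop :=
  J.length ≤ I.length ∧ ∀ i < J.length, (J.getD i []).IsPrefix (I.getD i [])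

/-- A skew colored immaculate tableau of shape `I/J`: a filling of the active boxes
(the `i`-th row keeps the last `|w_i| - |v_i|` boxes) with positive integers, rows weakly
increasing left to right, and the entries in the (active part of the) first column of `I`
strictly increasing top to bottom. -/
def IsSkewCIT (I J : Sentence A) (f : Filling) : Prop :=
  f.map List.length =
    (List.range I.length).map (fun i => (I.getD i []).length - (J.getD i []).length) ∧
  (∀ row ∈ f, row.Chain' (· ≤ ·)) ∧
  ((List.range I.length).filterMap
    (fun i => if (J.getD i []).length = 0 then (f.getD i []).head? else none)).Chain' (· < ·) ∧
  (∀ x ∈ f.flatten, 1 ≤ x)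

/-- The word of the type of a skew tableau at value `v`: the colors of the active boxes with
entry `v`, read left to right, bottom to top. -/
def skewTypeWord (I J : Sentence A) (f : Filling) (v : ℕ) : List A :=
  (((List.range I.length).reverse).map (fun i =>
    rowWith ((I.getD i []).drop (J.getD i []).length) (f.getD i []) v)).flatten

/-- `SkewHasType I J f K` : the skew tableau `f` of shape `I/J` has type `K`. -/
def SkewHasType (I J : Sentence A) (f : Filling) (K : Sentence A) : Prop :=
  ∀ v, 1 ≤ v → skewTypeWord I J f v = K.getD (v - 1) []

/-! ### The complement involution `ψ` and the row-strict functions -/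

/-- The complement `I^c` of a sentence: the unique sentence with the same maximal word
that splits exactly where `I` does not. -/
def complSent (I : Sentence A) : Sentence A :=
  let w := I.flatten
  let n := w.length
  if n = 0 then []
  else
    let splits := (((wl I).scanl (· + ·) 0).drop 1).dropLast
    let csplits := (List.range' 1 (n - 1)).filter (fun i => !(splits.contains i))
    splitByComp w (compOf csplits n)

/-- The `M_I`-coefficient of a colored quasisymmetric function. -/
noncomputable def coeffM (G : QSymA A) (I : Sentence A) : ℚ := G (I, List.range' 1 I.length)

/-- The image of `M_I` under `ψ`, via `M_I = Σ_{J ⪯ I} (-1)^{ℓ(J)-ℓ(I)} F_J` and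
`ψ(F_J) = F_{J^c}`. -/
noncomputable def psiM (I : Sentence A) : QSymA A :=
  ∑ᶠ J ∈ {J : Sentence A | Refines J I}, ((-1 : ℚ)) ^ (J.length - I.length) • FQ (complSent J)

/-- The linear involution `ψ` of `QSym_A`, determined by `ψ(F_I) = F_{I^c}`. -/
noncomputable def psiQ (G : QSymA A) : QSymA A :=
  ∑ᶠ I ∈ {I : Sentence A | IsSentence I}, coeffM G I • psiM I

/-- A colored row-strict immaculate tableau of shape `I`: entries strictly increase left to
right along each row and weakly increase top to bottom down the first column. -/
def IsCRSIT (I : Sentence A) (f : Filling) : Prop :=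
  f.map List.length = I.map List.length ∧
  (∀ row ∈ f, row.Chain' (· < ·)) ∧
  (f.filterMap List.head?).Chain' (· ≤ ·) ∧
  (∀ x ∈ f.flatten, 1 ≤ x)

/-- The word of the type of a row-strict tableau at value `v`: the colors of the boxes with
entry `v`, read left to right, top to bottom. -/
def rsTypeWord (I : Sentence A) (f : Filling) (v : ℕ) : List A :=
  ((I.zip f).map (fun p => rowWith p.1 p.2 v)).flatten

/-- The monomial `x_T` of a colored row-strict immaculate tableau. -/
def rsMonoOf (I : Sentence A) (f : Filling) : Mono A :=
  let vs := ((List.range (maxEntry f)).map (· + 1)).filter (fun v => !(rsTypeWord I f v).isEmpty)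
  (vs.map (rsTypeWord I f), vs)

/-- The colored row-strict dual immaculate function `ℛ𝔖*_J = Σ_T x_T`, summed over all
colored row-strict immaculate tableaux `T` of shape `J`. -/
noncomputable def rsDualImm (J : Sentence A) : QSymA A := fun m =>
  (Set.ncard {f : Filling | IsCRSIT J f ∧ rsMonoOf J f = m} : ℚ)

/-- `α ⪰ β` in the reverse lexicographic order on compositions: at the first index where
they differ, `α` has the *smaller* entry (padding with zeros). -/
def RevLexGE (α β : List ℕ) : Prop :=
  α = β ∨ ∃ i, (∀ j < i, α.getD j 0 = β.getD j 0) ∧ α.getD i 0 < β.getD i 0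

/-! ### Uncolored (ordinary) versions, for `QSym` -/

namespace Uncolored

/-- A composition: a list of positive integers. -/
def IsComposition (α : List ℕ) : Prop := ∀ a ∈ α, 1 ≤ a

/-- `β ⪯ α`: the composition `α` is obtained by summing adjacent parts of `β`. -/
def RefinesC (β α : List ℕ) : Prop :=
  ∃ P : List (List ℕ), (∀ p ∈ P, p ≠ []) ∧ P.flatten = β ∧ P.map List.sum = α

/-- A monomial `x_{i_1}^{a_1} ⋯ x_{i_m}^{a_m}` recorded by its exponents and its
strictly increasing positive indices. -/
abbrev MonoU := List ℕ × List ℕ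

/-- A quasisymmetric "series", recorded by its coefficient function on monomials.
`QSym` is the span of the monomial functions `MU α` inside this space. -/
abbrev QSymU := MonoU → ℚ

/-- Validity of a monomial: matching lengths, strictly increasing positive indices,
positive exponents. -/
def ValidMonoU (m : MonoU) : Prop :=
  m.1.length = m.2.length ∧ m.2.Chain' (· < ·) ∧ (∀ j ∈ m.2, 1 ≤ j) ∧ ∀ a ∈ m.1, 1 ≤ a

open Classical in
/-- The monomial quasisymmetric function `M_α`. -/
noncomputable def MU (α : List ℕ) : QSymU := fun m =>
  if m.1 = α ∧ ValidMonoU m then 1 else 0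

/-- The fundamental quasisymmetric function `F_α = Σ_{β ⪯ α} M_β`. -/
noncomputable def FU (α : List ℕ) : QSymU :=
  ∑ᶠ β ∈ {β : List ℕ | RefinesC β α}, MU β

/-- An immaculate tableau of shape `α`: positive integer entries, rows weakly increasing
left to right, first column strictly increasing top to bottom. -/
def IsIT (α : List ℕ) (f : Filling) : Prop :=
  f.map List.length = α ∧
  (∀ row ∈ f, row.Chain' (· ≤ ·)) ∧
  (f.filterMap List.head?).Chain' (· < ·) ∧
  (∀ x ∈ f.flatten, 1 ≤ x)

/-- The number of boxes of `f` with entry `v`. -/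
def countOf (f : Filling) (v : ℕ) : ℕ := (f.flatten.filter (fun x => x == v)).length

/-- The monomial `x^T` of an immaculate tableau `T` of type `β`:
`x_1^{β_1} ⋯ x_h^{β_h}` (zero exponents skipped). -/
def monoOfU (f : Filling) : MonoU :=
  let vs := ((List.range (maxEntry f)).map (· + 1)).filter (fun v => decide (countOf f v ≠ 0))
  (vs.map (countOf f), vs)

/-- The dual immaculate function `𝔖*_α = Σ_T x^T`, summed over all immaculate tableaux
of shape `α`. -/
noncomputable def dualImmU (α : List ℕ) : QSymU := fun m =>
  (Set.ncard {f : Filling | IsIT α f ∧ monoOfU f = m} : ℚ)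

/-- The descent composition `co(U)` of a standard immaculate tableau. -/
def descComp (f : Filling) : List ℕ :=
  if nBoxes f = 0 then [] else compOf (descList f) (nBoxes f)

/-- `L_{α,β}`: the number of standard immaculate tableaux of shape `α` with descent
composition `β`. -/
noncomputable def LU (α β : List ℕ) : ℕ :=
  Set.ncard {f : Filling | IsIT α f ∧ IsStandardF f ∧ descComp f = β}

/-- Edges of the immaculate descent graph `𝔇^n`. -/
def IsEdgeU (α β : List ℕ) : Prop := β ≠ α ∧ LU α β ≠ 0

/-- Directed paths from `α` to `β` in the immaculate descent graph, recorded by their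
lists of successive vertices; `[α]` is the empty path at `α`. -/
def PathsU (α β : List ℕ) : Set (List (List ℕ)) :=
  {p | p.head? = some α ∧ p.getLast? = some β ∧ p.Chain' IsEdgeU}

/-- The signed weight `(-1)^{ℓ(𝒫)} prod(𝒫)` of a path. -/
noncomputable def pathWeightU (p : List (List ℕ)) : ℚ :=
  ((-1 : ℚ)) ^ (p.length - 1) * ((p.zip p.tail).map (fun e => (LU e.1 e.2 : ℚ))).prod

/-- `L⁻¹_{α,β} = Σ_𝒫 (-1)^{ℓ(𝒫)} prod(𝒫)`, over directed paths from `α` to `β` in `𝔇^n`. -/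
noncomputable def LinvU (α β : List ℕ) : ℚ :=
  ∑ᶠ p ∈ PathsU α β, pathWeightU p

end Uncolored

end ColoredImm

namespace ColoredImm

/-!
Fix a standard tableau `U` of shape `J`. The tableaux `T` with `std(T) = U` are exactly the
relabellings `g ∘ U` in which `g` is positive and weakly increasing, and strictly increasing at
every descent of `U`: equal entries are read from the bottom row to the top row, so two boxes
holding `i` and `i + 1` in `U` may share an entry of `T` only if `i + 1` is not in a lower row.
The type of `g ∘ U` cuts the word `w` of colors of `U`, read in the order of the entries, into the
level sets of `g`. Hence `B` is such a type if and only if its words concatenate to `w` and every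
descent of `U` is an end of one of its words. Since one sentence refines another exactly when both
concatenate to the same word and every word end of the second is a word end of the first, this
says that the flattening of `B` refines `co_A(U)`.
-/

section Words

variable {A : Type*}

/-- The end of the `m`-th word of the weak sentence `B`, as a position in the word `B.flatten`. -/
def cutPoint (B : Sentence A) (m : ℕ) : ℕ := ((wl B).take m).sum

/-- `d` is a *cut* of the weak sentence `B` if some word of `B` ends after the first `d` letters
of `B.flatten`; the position `0` always counts as a cut. -/
def IsCut (B : Sentence A) (d : ℕ) : Prop := ∃ m, cutPoint B m = d

theorem flatten_take (B : Sentence A) (m : ℕ) :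
    (B.take m).flatten = B.flatten.take (cutPoint B m) :=
  (List.take_sum_flatten B m).symm

theorem length_flatten_take (B : Sentence A) (m : ℕ) :
    (B.take m).flatten.length = cutPoint B m := by
  rw [List.length_flatten, List.map_take, cutPoint, wl]

theorem cutPoint_zero (B : Sentence A) : cutPoint B 0 = 0 := by
  simp [cutPoint]

theorem cutPoint_length (B : Sentence A) : cutPoint B B.length = B.flatten.length := by
  rw [← length_flatten_take, List.take_length]

theorem cutPoint_le_length (B : Sentence A) (m : ℕ) : cutPoint B m ≤ B.flatten.length := by
  rw [← length_flatten_take, flatten_take, List.length_take]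
  exact min_le_right _ _

theorem monotone_cutPoint (B : Sentence A) : Monotone (cutPoint B) :=
  List.monotone_sum_take (wl B)

theorem isCut_zero (B : Sentence A) : IsCut B 0 := ⟨0, cutPoint_zero B⟩

theorem isCut_length (B : Sentence A) : IsCut B B.flatten.length := ⟨B.length, cutPoint_length B⟩

theorem IsCut.le_length {B : Sentence A} {d : ℕ} (h : IsCut B d) : d ≤ B.flatten.length := by
  obtain ⟨m, rfl⟩ := h
  exact cutPoint_le_length B m

theorem isCut_iff_exists_append {C : Sentence A} {d : ℕ} :
    IsCut C d ↔ ∃ C₁ C₂, C₁ ++ C₂ = C ∧ C₁.flatten.length = d := by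
  constructor
  · rintro ⟨m, rfl⟩
    exact ⟨C.take m, C.drop m, List.take_append_drop m C, length_flatten_take C m⟩
  · rintro ⟨C₁, C₂, rfl, rfl⟩
    exact ⟨C₁.length, by rw [← length_flatten_take, List.take_left]⟩

theorem isCut_append {C₁ C₂ : Sentence A} {d : ℕ} :
    IsCut (C₁ ++ C₂) d ↔ IsCut C₁ d ∨ ∃ e, IsCut C₂ e ∧ d = C₁.flatten.length + e := by
  simp only [isCut_iff_exists_append, List.append_eq_append_iff]
  constructor
  · rintro ⟨D₁, D₂, ⟨E, rfl, rfl⟩ | ⟨E, rfl, rfl⟩, rfl⟩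
    · exact .inl ⟨D₁, E, rfl, rfl⟩
    · exact .inr ⟨E.flatten.length, ⟨E, D₂, rfl, rfl⟩, by simp⟩
  · rintro (⟨D₁, D₂, rfl, rfl⟩ | ⟨_, ⟨D₁, D₂, rfl, rfl⟩, rfl⟩)
    · exact ⟨D₁, D₂ ++ C₂, .inl ⟨D₂, rfl, rfl⟩, rfl⟩
    · exact ⟨C₁ ++ D₁, D₂, .inr ⟨D₁, rfl, rfl⟩, by simp⟩

theorem isCut_nil {d : ℕ} : IsCut ([] : Sentence A) d ↔ d = 0 := by
  simp [IsCut, cutPoint, wl, eq_comm]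

theorem isCut_cons {w : List A} {C : Sentence A} {d : ℕ} :
    IsCut (w :: C) d ↔ d = 0 ∨ ∃ e, IsCut C e ∧ d = w.length + e := by
  constructor
  · rintro ⟨_ | m, rfl⟩
    · exact .inl (cutPoint_zero _)
    · exact .inr ⟨cutPoint C m, ⟨m, rfl⟩, by simp [cutPoint, wl]⟩
  · rintro (rfl | ⟨_, ⟨m, rfl⟩, rfl⟩)
    · exact isCut_zero _
    · exact ⟨m + 1, by simp [cutPoint, wl]⟩

theorem isCut_flattenWS {B : Sentence A} {d : ℕ} : IsCut (flattenWS B) d ↔ IsCut B d := by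
  induction B generalizing d with
  | nil => rfl
  | cons w B ih =>
    cases w with
    | nil =>
      have hdrop : flattenWS ([] :: B) = flattenWS B := by simp [flattenWS]
      have hzero : d = 0 → IsCut B d := by
        rintro rfl
        exact isCut_zero B
      simpa [hdrop, ih, isCut_cons] using hzero
    | cons a w =>
      have hkeep : flattenWS ((a :: w) :: B) = (a :: w) :: flattenWS B := by simp [flattenWS]
      simp only [hkeep, isCut_cons, ih]

theorem flatten_flattenWS (B : Sentence A) : (flattenWS B).flatten = B.flatten :=
  List.flatten_filter_not_isEmpty

theorem isSentence_flattenWS (B : Sentence A) : IsSentence (flattenWS B) := by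
  intro w hw
  simpa using (List.mem_filter.1 hw).2

end Words

section Refinement

variable {A : Type*}

theorem refines_nil {C : Sentence A} : Refines C [] ↔ C = [] := by
  simp [Refines, eq_comm]

theorem refines_cons {C D : Sentence A} {w : List A} :
    Refines C (w :: D) ↔
      ∃ C₁ C₂, C₁ ++ C₂ = C ∧ C₁ ≠ [] ∧ C₁.flatten = w ∧ Refines C₂ D := by
  constructor
  · rintro ⟨P, hP, rfl, hPD⟩
    obtain ⟨C₁, P, rfl, hw, hD⟩ := List.map_eq_cons_iff.1 hPD
    obtain ⟨hC₁, hP⟩ := List.forall_mem_cons.1 hP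
    exact ⟨C₁, P.flatten, rfl, hC₁, hw, P, hP, rfl, hD⟩
  · rintro ⟨C₁, _, rfl, hC₁, rfl, P, hP, rfl, rfl⟩
    exact ⟨C₁ :: P, List.forall_mem_cons.2 ⟨hC₁, hP⟩, rfl, rfl⟩

theorem IsSentence.eq_nil_of_flatten_eq_nil {C : Sentence A} (hC : IsSentence C)
    (h : C.flatten = []) : C = [] :=
  List.eq_nil_iff_forall_not_mem.2 fun w hw => hC w hw (List.flatten_eq_nil_iff.1 h w hw)

theorem refines_iff_isCut {C D : Sentence A} (hC : IsSentence C) (hD : IsSentence D) :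
    Refines C D ↔ C.flatten = D.flatten ∧ ∀ d, IsCut D d → IsCut C d := by
  induction D generalizing C with
  | nil =>
    rw [refines_nil]
    constructor
    · rintro rfl
      exact ⟨rfl, fun _ => id⟩
    · exact fun h => hC.eq_nil_of_flatten_eq_nil h.1
  | cons w D ih =>
    rw [IsSentence, List.forall_mem_cons] at hD
    rw [refines_cons]
    constructor
    · rintro ⟨C₁, C₂, rfl, -, rfl, hC₂D⟩
      obtain ⟨hflat, hcut⟩ := (ih (List.forall_mem_append.1 hC).2 hD.2).1 hC₂D
      refine ⟨by simp [hflat], fun d hd => ?_⟩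
      obtain rfl | ⟨e, he, rfl⟩ := isCut_cons.1 hd
      · exact isCut_zero _
      · exact isCut_append.2 (.inr ⟨e, hcut e he, rfl⟩)
    · rintro ⟨hflat, hcut⟩
      obtain ⟨C₁, C₂, rfl, hlen⟩ := isCut_iff_exists_append.1
        (hcut w.length (isCut_cons.2 (.inr ⟨0, isCut_zero D, rfl⟩)))
      rw [List.flatten_append, List.flatten_cons] at hflat
      obtain ⟨hC₁w, hC₂D⟩ := List.append_inj hflat hlen
      refine ⟨C₁, C₂, rfl, ?_, hC₁w, (ih (List.forall_mem_append.1 hC).2 hD.2).2 ⟨hC₂D, ?_⟩⟩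
      · rintro rfl
        exact hD.1 hC₁w.symm
      · intro e he
        obtain h | ⟨e', he', h⟩ :=
          isCut_append.1 (hcut (w.length + e) (isCut_cons.2 (.inr ⟨e, he, rfl⟩)))
        · obtain rfl : e = 0 := by have := h.le_length; omega
          exact isCut_zero C₂
        · obtain rfl : e = e' := by omega
          exact he'

end Refinement

section DescentComposition

variable {A : Type*}

theorem splitByComp_eq_splitLengths (w : List A) (α : List ℕ) :
    splitByComp w α = α.splitLengths w := by
  induction α generalizing w with
  | nil => rfl
  | cons a α ih => simp [splitByComp, ih]

/-- The composition `(d_1 - a, d_2 - d_1, …, n - d_k)` of `n - a`. It generalizes `compOf`, the case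
`a = 0`, so that statements about it can be proved by induction on `ds`. -/
def gaps (a : ℕ) (ds : List ℕ) (n : ℕ) : List ℕ :=
  List.zipWith (fun a b => b - a) (a :: ds) (ds ++ [n])

theorem gaps_nil (a n : ℕ) : gaps a [] n = [n - a] := rfl

theorem gaps_cons (a b : ℕ) (ds : List ℕ) (n : ℕ) :
    gaps a (b :: ds) n = (b - a) :: gaps b ds n := rfl

theorem pos_of_mem_gaps {a n x : ℕ} {ds : List ℕ} (h : (a :: (ds ++ [n])).IsChain (· < ·))
    (hx : x ∈ gaps a ds n) : 0 < x := by
  induction ds generalizing a with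
  | nil =>
    rw [gaps_nil, List.mem_singleton] at hx
    simp only [List.nil_append, List.isChain_pair] at h
    omega
  | cons b ds ih =>
    obtain ⟨hab, hb⟩ := List.isChain_cons_cons.1 h
    obtain rfl | hx := List.mem_cons.1 hx
    · exact Nat.sub_pos_of_lt hab
    · exact ih hb hx

theorem add_sum_gaps {a n : ℕ} {ds : List ℕ} (h : (a :: (ds ++ [n])).IsChain (· < ·)) :
    a + (gaps a ds n).sum = n := by
  induction ds generalizing a with
  | nil =>
    simp only [List.nil_append, List.isChain_pair] at h
    simp only [gaps_nil, List.sum_singleton]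
    omega
  | cons b ds ih =>
    obtain ⟨hab, hb⟩ := List.isChain_cons_cons.1 h
    have hsum := ih hb
    rw [gaps_cons, List.sum_cons]
    omega

theorem exists_sum_take_gaps_iff {a n d : ℕ} {ds : List ℕ}
    (h : (a :: (ds ++ [n])).IsChain (· < ·)) :
    (∃ m, ((gaps a ds n).take m).sum = d) ↔ a + d ∈ a :: (ds ++ [n]) := by
  have exists_take_cons (x : ℕ) (xs : List ℕ) (d : ℕ) :
      (∃ m, ((x :: xs).take m).sum = d) ↔ d = 0 ∨ ∃ e, (∃ m, (xs.take m).sum = e) ∧ d = x + e := by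
    constructor
    · rintro ⟨_ | m, rfl⟩
      · exact .inl rfl
      · exact .inr ⟨_, ⟨m, rfl⟩, by simp⟩
    · rintro (rfl | ⟨_, ⟨m, rfl⟩, rfl⟩)
      · exact ⟨0, rfl⟩
      · exact ⟨m + 1, by simp⟩
  induction ds generalizing a d with
  | nil =>
    simp only [List.nil_append, List.isChain_pair] at h
    simp only [gaps_nil, exists_take_cons, List.take_nil, List.sum_nil, List.nil_append,
      List.mem_cons, List.not_mem_nil, or_false, exists_const, exists_eq_left']
    omega
  | cons b ds ih =>
    obtain ⟨hab, hb⟩ := List.isChain_cons_cons.1 h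
    have hle : ∀ x ∈ b :: (ds ++ [n]), b ≤ x :=
      List.forall_mem_cons.2 ⟨le_rfl, fun x hx =>
        (List.rel_of_pairwise_cons (List.isChain_iff_pairwise.1 hb) hx).le⟩
    rw [gaps_cons, exists_take_cons, List.cons_append, List.mem_cons]
    refine or_congr (by omega) ⟨?_, fun hd => ?_⟩
    · rintro ⟨e, he, rfl⟩
      have := (ih hb).1 he
      rwa [show a + (b - a + e) = b + e by omega]
    · have := hle _ hd
      exact ⟨a + d - b, (ih hb).2 (by rwa [Nat.add_sub_cancel' this]), by omega⟩

theorem mem_descList {U : Filling} {d : ℕ} :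
    d ∈ descList U ↔ (1 ≤ d ∧ d < nBoxes U) ∧ rowOf U d < rowOf U (d + 1) := by
  simp only [descList, List.mem_filter, List.mem_range'_1, decide_eq_true_eq]
  exact and_congr_left fun _ => by omega

theorem isChain_descList {U : Filling} (hU : nBoxes U ≠ 0) :
    (0 :: (descList U ++ [nBoxes U])).IsChain (· < ·) := by
  have hsorted : (descList U).Pairwise (· < ·) := List.Pairwise.filter _ List.pairwise_lt_range'
  simp only [List.isChain_iff_pairwise, List.pairwise_cons, List.pairwise_append, List.mem_append,
    List.mem_singleton, forall_eq]
  refine ⟨?_, hsorted, by simp, fun d hd => (mem_descList.1 hd).1.2⟩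
  rintro d (hd | rfl)
  · exact (mem_descList.1 hd).1.1
  · exact Nat.pos_of_ne_zero hU

variable [Inhabited A]

theorem length_readWord (J : Sentence A) (U : Filling) : (readWord J U).length = nBoxes U := by
  simp [readWord]

theorem coA_of_nBoxes_eq_zero (J : Sentence A) {U : Filling} (hU : nBoxes U = 0) :
    coA J U = [] :=
  if_pos hU

theorem coA_of_nBoxes_ne_zero (J : Sentence A) {U : Filling} (hU : nBoxes U ≠ 0) :
    coA J U = (gaps 0 (descList U) (nBoxes U)).splitLengths (readWord J U) := by
  rw [coA, if_neg hU, splitByComp_eq_splitLengths]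
  rfl

theorem sum_gaps_descList (J : Sentence A) {U : Filling} (hU : nBoxes U ≠ 0) :
    (gaps 0 (descList U) (nBoxes U)).sum = (readWord J U).length := by
  rw [length_readWord, ← zero_add (List.sum _), add_sum_gaps (isChain_descList hU)]

theorem flatten_coA (J : Sentence A) (U : Filling) : (coA J U).flatten = readWord J U := by
  by_cases hU : nBoxes U = 0
  · rw [coA_of_nBoxes_eq_zero J hU, List.flatten_nil, readWord, hU, List.range_zero, List.map_nil]
  · rw [coA_of_nBoxes_ne_zero J hU]
    exact List.flatten_splitLengths _ _ (sum_gaps_descList J hU).ge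

theorem wl_coA (J : Sentence A) {U : Filling} (hU : nBoxes U ≠ 0) :
    wl (coA J U) = gaps 0 (descList U) (nBoxes U) := by
  rw [coA_of_nBoxes_ne_zero J hU]
  exact List.map_splitLengths_length _ _ (sum_gaps_descList J hU).le

theorem isSentence_coA (J : Sentence A) (U : Filling) : IsSentence (coA J U) := by
  intro w hw
  by_cases hU : nBoxes U = 0
  · simp [coA_of_nBoxes_eq_zero J hU] at hw
  · have hlen : w.length ∈ gaps 0 (descList U) (nBoxes U) :=
      wl_coA J hU ▸ List.mem_map_of_mem hw
    exact List.length_pos_iff.1 (pos_of_mem_gaps (isChain_descList hU) hlen)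

theorem isCut_coA {J : Sentence A} {U : Filling} {d : ℕ} :
    IsCut (coA J U) d ↔ d = 0 ∨ d ∈ descList U ∨ d = nBoxes U := by
  by_cases hU : nBoxes U = 0
  · simp [coA_of_nBoxes_eq_zero J hU, isCut_nil, mem_descList, hU]
  · simp only [IsCut, cutPoint, wl_coA J hU]
    rw [exists_sum_take_gaps_iff (isChain_descList hU)]
    simp

theorem refines_coA_iff {J B : Sentence A} {U : Filling} :
    Refines (flattenWS B) (coA J U) ↔
      B.flatten = readWord J U ∧ ∀ d ∈ descList U, IsCut B d := by
  rw [refines_iff_isCut (isSentence_flattenWS B) (isSentence_coA J U), flatten_flattenWS,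
    flatten_coA]
  refine and_congr_right fun hB => ?_
  have hlast : IsCut B (nBoxes U) := by
    rw [← length_readWord J U, ← hB]
    exact isCut_length B
  simp only [isCut_coA, isCut_flattenWS]
  constructor
  · exact fun h d hd => h d (.inr (.inl hd))
  · rintro h d (rfl | hd | rfl)
    exacts [isCut_zero B, h d hd, hlast]

end DescentComposition

section Blocks

variable {A : Type*}

/-- `g x` is the number, counted from `1`, of the word of the weak sentence `B` that contains the
`x`-th letter of `B.flatten`. It is stated as a Galois connection with `cutPoint B`. -/
def IsBlockIndex (B : Sentence A) (g : ℕ → ℕ) : Prop :=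
  ∀ x ∈ Set.Icc 1 B.flatten.length, ∀ m, g x ≤ m ↔ x ≤ cutPoint B m

theorem exists_isBlockIndex (B : Sentence A) : ∃ g, IsBlockIndex B g := by
  refine ⟨fun x => sInf {m | x ≤ cutPoint B m}, fun x hx m => ⟨fun hm => ?_, fun hm => ?_⟩⟩
  · have hne : {m | x ≤ cutPoint B m}.Nonempty := ⟨B.length, hx.2.trans_eq (cutPoint_length B).symm⟩
    exact (Nat.sInf_mem hne).trans (monotone_cutPoint B hm)
  · exact Nat.sInf_le hm

namespace IsBlockIndex

variable {B : Sentence A} {g : ℕ → ℕ}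

theorem pos (h : IsBlockIndex B g) : ∀ x ∈ Set.Icc 1 B.flatten.length, 0 < g x := by
  intro x hx
  have hx0 := h x hx 0
  rw [cutPoint_zero] at hx0
  have := hx.1
  omega

theorem monotoneOn (h : IsBlockIndex B g) : MonotoneOn g (Set.Icc 1 B.flatten.length) :=
  fun x hx y hy hxy => (h x hx _).2 (hxy.trans ((h y hy _).1 le_rfl))

theorem lt_succ_iff_isCut (h : IsBlockIndex B g) {d : ℕ} (hd : 1 ≤ d) (hdn : d < B.flatten.length) :
    g d < g (d + 1) ↔ IsCut B d := by
  have hle := h d ⟨hd, hdn.le⟩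
  have hsucc := h (d + 1) ⟨by omega, hdn⟩
  constructor
  · intro hlt
    refine ⟨g d, le_antisymm ?_ ((hle _).1 le_rfl)⟩
    have := hsucc (g d)
    omega
  · rintro ⟨m, hm⟩
    have := hle m
    have := hsucc m
    omega

end IsBlockIndex

theorem filter_append_filter_not {α : Type*} {p : α → Bool} {l : List α}
    (h : l.Pairwise fun a b => p b → p a) : l.filter p ++ l.filter (fun a => !p a) = l := by
  induction l with
  | nil => rfl
  | cons a l ih =>
    obtain ⟨ha, hl⟩ := List.pairwise_cons.1 h
    by_cases hpa : p a
    · simp [hpa, ih hl]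
    · have hl_false : ∀ b ∈ l, ¬ p b := fun b hb hpb => hpa (ha b hb hpb)
      simpa [hpa, List.filter_eq_nil_iff.2 hl_false] using hl_false

theorem pairwise_apply_le_range' {g : ℕ → ℕ} {n : ℕ} (hg : MonotoneOn g (Set.Icc 1 n)) :
    (List.range' 1 n).Pairwise fun x y => g x ≤ g y := by
  refine List.Pairwise.imp_of_mem (R := (· < ·)) ?_ List.pairwise_lt_range'
  intro x y hx hy hxy
  rw [List.mem_range'_1] at hx hy
  exact hg ⟨hx.1, by omega⟩ ⟨hy.1, by omega⟩ hxy.le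

theorem filter_le_succ {α : Type*} {g : α → ℕ} {l : List α} (h : l.Pairwise fun x y => g x ≤ g y)
    (m : ℕ) :
    l.filter (fun x => decide (g x ≤ m + 1)) =
      l.filter (fun x => decide (g x ≤ m)) ++ l.filter (fun x => g x == m + 1) := by
  have hclosed : (l.filter (fun x => decide (g x ≤ m + 1))).Pairwise
      fun x y => decide (g y ≤ m) → decide (g x ≤ m) := by
    refine (h.imp fun {x y} hxy => ?_).filter _
    simpa using hxy.trans
  rw [← filter_append_filter_not hclosed, List.filter_filter, List.filter_filter]
  congr 2
  · funext x
    rw [Bool.eq_iff_iff]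
    simp only [Bool.and_eq_true, decide_eq_true_eq]
    omega
  · funext x
    rw [Bool.eq_iff_iff]
    simp only [Bool.and_eq_true, Bool.not_eq_true', decide_eq_false_iff_not, decide_eq_true_eq,
      beq_iff_eq]
    omega

theorem filter_le_range'_eq_range'_iff {g : ℕ → ℕ} {n k m : ℕ} (hk : k ≤ n) :
    (List.range' 1 n).filter (fun x => decide (g x ≤ m)) = List.range' 1 k ↔
      ∀ x ∈ Set.Icc 1 n, g x ≤ m ↔ x ≤ k := by
  constructor
  · rintro h x ⟨hx, hxn⟩
    have hmem := congrArg (x ∈ ·) h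
    simp only [List.mem_filter, List.mem_range'_1, decide_eq_true_eq, eq_iff_iff] at hmem
    omega
  · intro h
    refine (List.Pairwise.filter _ List.pairwise_lt_range').sortedLT.eq_of_mem_iff
      (List.sortedLT_range' 1 k one_ne_zero) fun x => ?_
    simp only [List.mem_filter, List.mem_range'_1, decide_eq_true_eq]
    have := h x
    simp only [Set.mem_Icc] at this
    omega

theorem exists_filter_le_range'_eq_range' {g : ℕ → ℕ} {n : ℕ} (hg : MonotoneOn g (Set.Icc 1 n))
    (m : ℕ) :
    ∃ k ≤ n, (List.range' 1 n).filter (fun x => decide (g x ≤ m)) = List.range' 1 k := by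
  have hclosed : (List.range' 1 n).Pairwise fun x y => decide (g y ≤ m) → decide (g x ≤ m) :=
    (pairwise_apply_le_range' hg).imp fun {x y} hxy => by simpa using hxy.trans
  have happend := (filter_append_filter_not hclosed).symm
  obtain ⟨k, hk, hfilter, -⟩ := List.range'_eq_append_iff.1 happend
  exact ⟨k, hk, hfilter⟩

theorem flatten_take_succ (B : Sentence A) (m : ℕ) :
    (B.take (m + 1)).flatten = (B.take m).flatten ++ B.getD m [] := by
  rw [List.take_add_one, List.flatten_append, List.getD_eq_getElem?_getD]
  cases B[m]? <;> simp

theorem map_filter_eq_iff_flatten_take {α : Type*} {B : Sentence A} {g : α → ℕ} {c : α → A}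
    {l : List α} (hpos : ∀ x ∈ l, 0 < g x) (hsorted : l.Pairwise fun x y => g x ≤ g y) :
    (∀ v, 1 ≤ v → (l.filter (fun x => g x == v)).map c = B.getD (v - 1) []) ↔
      ∀ m, (B.take m).flatten = (l.filter (fun x => decide (g x ≤ m))).map c := by
  constructor
  · intro h m
    induction m with
    | zero =>
      have hnil : l.filter (fun x => decide (g x ≤ 0)) = [] :=
        List.filter_eq_nil_iff.2 fun x hx => by have := hpos x hx; simp; omega
      rw [hnil, List.take_zero, List.flatten_nil, List.map_nil]
    | succ m ih =>
      rw [flatten_take_succ, filter_le_succ hsorted, List.map_append, ih, h (m + 1) m.succ_pos,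
        Nat.add_sub_cancel]
  · rintro h (_ | m) hv
    · omega
    · have hm := h (m + 1)
      rw [flatten_take_succ, filter_le_succ hsorted, List.map_append, h m] at hm
      exact (List.append_cancel_left hm).symm

theorem map_filter_eq_iff_isBlockIndex {B : Sentence A} {g : ℕ → ℕ} {c : ℕ → A} {n : ℕ}
    (hpos : ∀ x ∈ Set.Icc 1 n, 0 < g x) (hg : MonotoneOn g (Set.Icc 1 n)) :
    (∀ v, 1 ≤ v → ((List.range' 1 n).filter (fun x => g x == v)).map c = B.getD (v - 1) []) ↔
      B.flatten = (List.range' 1 n).map c ∧ IsBlockIndex B g := by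
  have hpos_mem : ∀ x ∈ List.range' 1 n, 0 < g x := by
    intro x hx
    rw [List.mem_range'_1] at hx
    exact hpos x ⟨hx.1, by omega⟩
  rw [map_filter_eq_iff_flatten_take hpos_mem (pairwise_apply_le_range' hg)]
  constructor
  · intro h
    have hflat : B.flatten = (List.range' 1 n).map c := by
      have hall : ∀ x ∈ List.range' 1 n, decide (g x ≤ max B.length (g n)) := by
        intro x hx
        rw [List.mem_range'_1] at hx
        have := hg ⟨hx.1, by omega⟩ ⟨by omega, le_rfl⟩ (show x ≤ n by omega)
        simp [this]
      rw [← List.filter_eq_self.2 hall, ← h, List.take_of_length_le (le_max_left _ _)]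
    refine ⟨hflat, fun x hx m => ?_⟩
    rw [hflat, List.length_map, List.length_range'] at hx
    obtain ⟨k, hk, hfilter⟩ := exists_filter_le_range'_eq_range' hg m
    have hcut : cutPoint B m = k := by
      rw [← length_flatten_take, h, hfilter, List.length_map, List.length_range']
    rw [hcut]
    exact (filter_le_range'_eq_range'_iff hk).1 hfilter x hx
  · rintro ⟨hflat, hB⟩ m
    have hlen : B.flatten.length = n := by rw [hflat, List.length_map, List.length_range']
    have hcut : cutPoint B m ≤ n := hlen ▸ cutPoint_le_length B m
    rw [(filter_le_range'_eq_range'_iff hcut).2 fun x hx => hB x (hlen.symm ▸ hx) m, flatten_take,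
      hflat, ← List.map_take, List.take_range'_of_length_ge hcut]

end Blocks

section Boxes

theorem lt_length_of_lt_length_getD {X : Type*} {f : List (List X)} {r j : ℕ}
    (h : j < (f.getD r []).length) : r < f.length := by
  by_contra hr
  rw [List.getD_eq_default _ _ (not_lt.1 hr)] at h
  exact Nat.not_lt_zero _ h

theorem mem_boxes {f : Filling} {b : ℕ × ℕ} : b ∈ boxes f ↔ b.2 < (f.getD b.1 []).length := by
  obtain ⟨r, j⟩ := b
  simpa [boxes] using lt_length_of_lt_length_getD

theorem length_getD_eq_of_map_length_eq {X Y : Type*} {f : List (List X)} {g : List (List Y)}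
    (h : f.map List.length = g.map List.length) (r : ℕ) :
    (f.getD r []).length = (g.getD r []).length := by
  rw [← List.getD_map (f := List.length), ← List.getD_map (f := List.length), h,
    List.length_nil, List.length_nil]

theorem length_eq_of_map_length_eq {X Y : Type*} {f : List (List X)} {g : List (List Y)}
    (h : f.map List.length = g.map List.length) : f.length = g.length := by
  simpa using congrArg List.length h

/-- The filling of the diagram of `f` whose entry at each box `b` is `φ b`. -/
def tabulate (f : Filling) (φ : ℕ × ℕ → ℕ) : Filling :=
  (List.range f.length).map fun r => (List.range (f.getD r []).length).map fun j => φ (r, j)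

theorem tabulate_congr_shape {f g : Filling} (h : f.map List.length = g.map List.length)
    (φ : ℕ × ℕ → ℕ) : tabulate f φ = tabulate g φ := by
  simp only [tabulate, length_eq_of_map_length_eq h, length_getD_eq_of_map_length_eq h]

theorem boxes_congr_shape {f g : Filling} (h : f.map List.length = g.map List.length) :
    boxes f = boxes g := by
  simp only [boxes, length_eq_of_map_length_eq h, length_getD_eq_of_map_length_eq h]

theorem entryAt_tabulate {f : Filling} {b : ℕ × ℕ} (φ : ℕ × ℕ → ℕ) (hb : b ∈ boxes f) :
    entryAt (tabulate f φ) b = φ b := by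
  have hcol := mem_boxes.1 hb
  have hrow := lt_length_of_lt_length_getD hcol
  simp only [List.getD_eq_getElem _ _ hrow] at hcol
  simp [tabulate, entryAt, hrow, hcol]

theorem tabulate_entryAt (f : Filling) : tabulate f (entryAt f) = f := by
  refine List.ext_getElem (by simp [tabulate]) fun r _ hr => ?_
  refine List.ext_getElem (by simp [tabulate, hr]) fun j _ hj => ?_
  simp [tabulate, entryAt, hr, hj]

theorem tabulate_eq_iff {f : Filling} {φ ψ : ℕ × ℕ → ℕ} :
    tabulate f φ = tabulate f ψ ↔ ∀ b ∈ boxes f, φ b = ψ b := by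
  constructor
  · intro h b hb
    rw [← entryAt_tabulate φ hb, h, entryAt_tabulate ψ hb]
  · intro h
    refine List.map_congr_left fun r _ => List.map_congr_left fun j hj => h _ ?_
    exact mem_boxes.2 (List.mem_range.1 hj)

theorem flatten_tabulate (f : Filling) (φ : ℕ × ℕ → ℕ) :
    (tabulate f φ).flatten = (boxes f).map φ := by
  simp [tabulate, boxes, List.map_flatten, Function.comp_def]

theorem flatten_eq_map_entryAt (f : Filling) : f.flatten = (boxes f).map (entryAt f) := by
  rw [← flatten_tabulate, tabulate_entryAt]

theorem stdFill_eq_tabulate (f : Filling) :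
    stdFill f = tabulate f fun b => 1 + (boxes f).countP fun b' => beforeB f b' b := by
  simp only [stdFill, tabulate, List.countP_eq_length_filter]

end Boxes

section Standard

variable {U : Filling}

theorem mem_flatten_iff_exists_box {f : Filling} {x : ℕ} :
    x ∈ f.flatten ↔ ∃ b ∈ boxes f, entryAt f b = x := by
  rw [flatten_eq_map_entryAt, List.mem_map]

theorem entryAt_mem_flatten {f : Filling} {b : ℕ × ℕ} (hb : b ∈ boxes f) :
    entryAt f b ∈ f.flatten :=
  mem_flatten_iff_exists_box.2 ⟨b, hb, rfl⟩

theorem IsStandardF.mem_flatten_iff (hU : IsStandardF U) {x : ℕ} :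
    x ∈ U.flatten ↔ x ∈ Set.Icc 1 (nBoxes U) := by
  rw [hU.mem_iff, List.mem_range'_1, Set.mem_Icc]
  omega

theorem IsStandardF.entryAt_mem_Icc (hU : IsStandardF U) {b : ℕ × ℕ} (hb : b ∈ boxes U) :
    entryAt U b ∈ Set.Icc 1 (nBoxes U) :=
  hU.mem_flatten_iff.1 (entryAt_mem_flatten hb)

theorem IsStandardF.perm_map_entryAt (hU : IsStandardF U) :
    ((boxes U).map (entryAt U)).Perm (List.range' 1 (nBoxes U)) :=
  flatten_eq_map_entryAt U ▸ hU

theorem IsStandardF.injOn_entryAt (hU : IsStandardF U) :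
    Set.InjOn (entryAt U) {b | b ∈ boxes U} :=
  List.inj_on_of_nodup_map (hU.perm_map_entryAt.nodup_iff.2 List.nodup_range')

/-- The box of `U` that contains the entry `x`; for repeated entries it is the first such box of
the topmost such row. -/
def boxOf (U : Filling) (x : ℕ) : ℕ × ℕ :=
  (rowOf U x, (U.getD (rowOf U x) []).findIdx (· == x))

theorem boxOf_spec {x : ℕ} (hx : x ∈ U.flatten) :
    boxOf U x ∈ boxes U ∧ entryAt U (boxOf U x) = x := by
  obtain ⟨row, hrow, hxrow⟩ := List.mem_flatten.1 hx
  have hr : rowOf U x < U.length :=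
    List.findIdx_lt_length_of_exists ⟨row, hrow, List.contains_iff_mem.2 hxrow⟩
  have hx_row : x ∈ U[rowOf U x] := List.contains_iff_mem.1 (List.findIdx_getElem (w := hr))
  have hc : U[rowOf U x].findIdx (· == x) < U[rowOf U x].length :=
    List.findIdx_lt_length_of_exists ⟨x, hx_row, beq_self_eq_true x⟩
  have hentry : U[rowOf U x][U[rowOf U x].findIdx (· == x)] = x :=
    beq_iff_eq.1 (List.findIdx_getElem (w := hc))
  simp only [mem_boxes, boxOf, entryAt, List.getD_eq_getElem _ _ hr, List.getD_eq_getElem _ _ hc]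
  exact ⟨hc, hentry⟩

theorem IsStandardF.boxOf_mem_boxes (hU : IsStandardF U) {x : ℕ} (hx : x ∈ Set.Icc 1 (nBoxes U)) :
    boxOf U x ∈ boxes U :=
  (boxOf_spec (hU.mem_flatten_iff.2 hx)).1

theorem IsStandardF.entryAt_boxOf (hU : IsStandardF U) {x : ℕ} (hx : x ∈ Set.Icc 1 (nBoxes U)) :
    entryAt U (boxOf U x) = x :=
  (boxOf_spec (hU.mem_flatten_iff.2 hx)).2

theorem IsStandardF.boxOf_entryAt (hU : IsStandardF U) {b : ℕ × ℕ} (hb : b ∈ boxes U) :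
    boxOf U (entryAt U b) = b :=
  have hspec := boxOf_spec (entryAt_mem_flatten hb)
  hU.injOn_entryAt hspec.1 hb hspec.2

theorem IsStandardF.rowOf_entryAt (hU : IsStandardF U) {b : ℕ × ℕ} (hb : b ∈ boxes U) :
    rowOf U (entryAt U b) = b.1 :=
  congrArg Prod.fst (hU.boxOf_entryAt hb)

theorem IsStandardF.countP_entryAt_lt (hU : IsStandardF U) {b : ℕ × ℕ} (hb : b ∈ boxes U) :
    1 + (boxes U).countP (fun b' => decide (entryAt U b' < entryAt U b)) = entryAt U b := by
  have hmem := hU.entryAt_mem_Icc hb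
  have hfilter : (List.range' 1 (nBoxes U)).filter (fun x => decide (x ≤ entryAt U b - 1)) =
      List.range' 1 (entryAt U b - 1) :=
    (filter_le_range'_eq_range'_iff (g := id) (by have := hmem.2; omega)).2 fun _ _ => Iff.rfl
  have hlt : (fun x => decide (x < entryAt U b)) = fun x => decide (x ≤ entryAt U b - 1) := by
    funext x
    have := hmem.1
    rw [decide_eq_decide]
    omega
  have hcount : (boxes U).countP (fun b' => decide (entryAt U b' < entryAt U b)) =
      ((boxes U).map (entryAt U)).countP fun x => decide (x < entryAt U b) := by
    rw [List.countP_map]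
    rfl
  rw [hcount, hU.perm_map_entryAt.countP_eq, List.countP_eq_length_filter, hlt, hfilter,
    List.length_range']
  have := hmem.1
  omega

theorem beforeB_iff {f : Filling} {b b' : ℕ × ℕ} :
    beforeB f b b' ↔ entryAt f b < entryAt f b' ∨
      entryAt f b = entryAt f b' ∧ (b'.1 < b.1 ∨ b.1 = b'.1 ∧ b.2 < b'.2) := by
  simp [beforeB]

theorem stdFill_eq_iff_entryAt {f : Filling} (hf : f.map List.length = U.map List.length) :
    stdFill f = U ↔
      ∀ b ∈ boxes U, 1 + (boxes U).countP (fun b' => beforeB f b' b) = entryAt U b := by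
  rw [stdFill_eq_tabulate, tabulate_congr_shape hf, boxes_congr_shape hf, ← tabulate_eq_iff,
    tabulate_entryAt]

theorem stdFill_eq_iff {f : Filling} (hU : IsStandardF U)
    (hf : f.map List.length = U.map List.length) :
    stdFill f = U ↔
      ∀ b ∈ boxes U, ∀ b' ∈ boxes U, entryAt U b < entryAt U b' → beforeB f b b' := by
  rw [stdFill_eq_iff_entryAt hf]
  constructor
  · intro h b hb b' hb' hlt
    by_contra hbefore
    -- Otherwise the box of the larger entry comes first, so its rank in `stdFill f` is no larger.
    have hmono : ∀ x ∈ boxes U, beforeB f x b' → beforeB f x b := by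
      intro x _ hx
      rw [beforeB_iff] at hx hbefore ⊢
      have hne : b ≠ b' := fun h => hlt.ne (congrArg _ h)
      rw [Ne, Prod.ext_iff] at hne
      omega
    have hcount := List.countP_mono_left hmono
    have := h b hb
    have := h b' hb'
    omega
  · intro h b hb
    rw [← hU.countP_entryAt_lt hb]
    congr 1
    refine List.countP_congr fun b' hb' => ?_
    rw [decide_eq_true_eq]
    refine ⟨fun hbefore => ?_, h b' hb' b hb⟩
    by_contra hlt
    obtain heq | hgt := (not_lt.1 hlt).eq_or_lt
    · obtain rfl := hU.injOn_entryAt hb hb' heq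
      rw [beforeB_iff] at hbefore
      omega
    · have hbefore' := h b hb b' hb' hgt
      rw [beforeB_iff] at hbefore hbefore'
      omega

end Standard

section TypeWord

variable {A : Type*}

/-- The boxes of `f` in the order in which the colors of equal entries are read off in the type:
from the bottom row to the top row, and from left to right in each row. -/
def boxesBottomUp (f : Filling) : List (ℕ × ℕ) :=
  ((List.range f.length).reverse.map fun r =>
    (List.range (f.getD r []).length).map fun j => (r, j)).flatten

theorem mem_boxesBottomUp {f : Filling} {b : ℕ × ℕ} : b ∈ boxesBottomUp f ↔ b ∈ boxes f := by
  simp [boxesBottomUp, boxes]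

theorem pairwise_boxesBottomUp (f : Filling) :
    (boxesBottomUp f).Pairwise fun b b' => b'.1 < b.1 ∨ b.1 = b'.1 ∧ b.2 < b'.2 := by
  simp only [boxesBottomUp, List.pairwise_flatten, List.forall_mem_map, List.pairwise_map,
    List.pairwise_reverse, true_and]
  refine ⟨fun r _ => List.pairwise_lt_range.imp fun h => .inr h,
    List.pairwise_lt_range.imp fun {r s} hrs => ?_⟩
  exact fun _ _ _ _ => .inl hrs

theorem zip_eq_map_range {X Y : Type*} {l : List X} {l' : List Y} (h : l.length = l'.length)
    (d : X) (d' : Y) :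
    l.zip l' = (List.range l.length).map fun i => (l.getD i d, l'.getD i d') := by
  refine List.ext_getElem (by simp [h]) fun i h₁ h₂ => ?_
  simp only [List.length_map, List.length_range] at h₂
  simp [h₂, h ▸ h₂]

theorem map_entryAt_filter_boxesBottomUp {f U : Filling} (hU : IsStandardF U)
    (hf : f.map List.length = U.map List.length) (hstd : stdFill f = U) (v : ℕ) :
    ((boxesBottomUp f).filter (fun b => entryAt f b == v)).map (entryAt U) =
      (List.range' 1 (nBoxes U)).filter (fun x => entryAt f (boxOf U x) == v) := by
  have horder := (stdFill_eq_iff hU hf).1 hstd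
  have hsorted : (((boxesBottomUp f).filter (fun b => entryAt f b == v)).map
      (entryAt U)).Pairwise (· < ·) := by
    rw [List.pairwise_map]
    refine ((pairwise_boxesBottomUp f).filter _).imp_of_mem fun {b b'} hb hb' hlt => ?_
    rw [List.mem_filter, mem_boxesBottomUp, boxes_congr_shape hf, beq_iff_eq] at hb hb'
    by_contra hle
    obtain heq | hgt := (not_lt.1 hle).eq_or_lt
    · obtain rfl := hU.injOn_entryAt hb'.1 hb.1 heq
      omega
    · have hbefore := beforeB_iff.1 (horder b' hb'.1 b hb.1 hgt)
      omega
  refine hsorted.sortedLT.eq_of_mem_iff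
    (List.Pairwise.filter _ List.pairwise_lt_range').sortedLT fun x => ?_
  simp only [List.mem_map, List.mem_filter, mem_boxesBottomUp, boxes_congr_shape hf,
    ← hU.mem_iff, hU.mem_flatten_iff, beq_iff_eq]
  constructor
  · rintro ⟨b, ⟨hb, hbv⟩, rfl⟩
    exact ⟨hU.entryAt_mem_Icc hb, by rwa [hU.boxOf_entryAt hb]⟩
  · rintro ⟨hx, hxv⟩
    exact ⟨boxOf U x, ⟨hU.boxOf_mem_boxes hx, hxv⟩, hU.entryAt_boxOf hx⟩

/-- The color of the box `b` in the colored composition diagram of `J`. -/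
def boxColor [Inhabited A] (J : Sentence A) (b : ℕ × ℕ) : A :=
  (J.getD b.1 []).getD b.2 default

variable [Inhabited A]

theorem boxColor_boxOf (J : Sentence A) (U : Filling) (x : ℕ) :
    boxColor J (boxOf U x) = colorOf J U x :=
  rfl

theorem typeWord_eq_map_boxColor {J : Sentence A} {f : Filling}
    (hf : f.map List.length = J.map List.length) (v : ℕ) :
    typeWord J f v =
      ((boxesBottomUp f).filter (fun b => entryAt f b == v)).map (boxColor J) := by
  have hrow (r : ℕ) : rowWith (J.getD r []) (f.getD r []) v =
      (((List.range (f.getD r []).length).map fun j => (r, j)).filter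
        (fun b => entryAt f b == v)).map (boxColor J) := by
    rw [rowWith, zip_eq_map_range (length_getD_eq_of_map_length_eq hf r).symm default 0,
      length_getD_eq_of_map_length_eq hf r, List.filter_map, List.filter_map, List.map_map,
      List.map_map]
    rfl
  rw [typeWord, zip_eq_map_range (length_eq_of_map_length_eq hf).symm [] [],
    ← length_eq_of_map_length_eq hf, ← List.map_reverse, List.map_map, boxesBottomUp,
    List.filter_flatten, List.map_flatten, List.map_map, List.map_map]
  congr 1
  exact List.map_congr_left fun r _ => hrow r

theorem typeWord_eq_map_colorOf {J : Sentence A} {f U : Filling} (hU : IsStandardF U)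
    (hfJ : f.map List.length = J.map List.length) (hfU : f.map List.length = U.map List.length)
    (hstd : stdFill f = U) (v : ℕ) :
    typeWord J f v = ((List.range' 1 (nBoxes U)).filter
      (fun x => entryAt f (boxOf U x) == v)).map (colorOf J U) := by
  rw [typeWord_eq_map_boxColor hfJ, ← map_entryAt_filter_boxesBottomUp hU hfU hstd, List.map_map]
  refine List.map_congr_left fun b hb => ?_
  rw [List.mem_filter, mem_boxesBottomUp, boxes_congr_shape hfU] at hb
  rw [Function.comp_apply, ← boxColor_boxOf, hU.boxOf_entryAt hb.1]

end TypeWord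

section Relabelling

variable {U : Filling} {g : ℕ → ℕ}

/-- The filling obtained from `U` by replacing every entry `x` with `g x`. -/
def mapEntries (g : ℕ → ℕ) (U : Filling) : Filling := U.map (List.map g)

theorem map_length_mapEntries (g : ℕ → ℕ) (U : Filling) :
    (mapEntries g U).map List.length = U.map List.length := by
  simp [mapEntries, Function.comp_def]

theorem mapEntries_eq_tabulate (g : ℕ → ℕ) (U : Filling) :
    mapEntries g U = tabulate U fun b => g (entryAt U b) := by
  conv_lhs => rw [← tabulate_entryAt U]
  simp [mapEntries, tabulate, Function.comp_def]

theorem entryAt_mapEntries {b : ℕ × ℕ} (hb : b ∈ boxes U) :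
    entryAt (mapEntries g U) b = g (entryAt U b) := by
  rw [mapEntries_eq_tabulate, entryAt_tabulate _ hb]

theorem eq_mapEntries_iff {f : Filling} (hf : f.map List.length = U.map List.length) :
    f = mapEntries g U ↔ ∀ b ∈ boxes U, entryAt f b = g (entryAt U b) := by
  rw [mapEntries_eq_tabulate, ← tabulate_eq_iff, ← tabulate_congr_shape hf (entryAt f),
    tabulate_entryAt]

/-- A *compatible* relabelling of the entries of a standard filling `U` is positive and weakly
increasing, and it increases strictly at the descents of `U`. -/
structure IsCompatible (U : Filling) (g : ℕ → ℕ) : Prop where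
  pos : ∀ x ∈ Set.Icc 1 (nBoxes U), 0 < g x
  monotoneOn : MonotoneOn g (Set.Icc 1 (nBoxes U))
  lt_succ : ∀ d ∈ descList U, g d < g (d + 1)

theorem IsCompatible.lt_of_rowOf_lt (hg : IsCompatible U g) {x y : ℕ} (hx : 1 ≤ x) (hxy : x ≤ y)
    (hy : y ≤ nBoxes U) (hrow : rowOf U x < rowOf U y) : g x < g y := by
  -- Some step from `x` up to `y` moves to a lower row, and that step is a descent.
  induction y, hxy using Nat.le_induction with
  | base => exact absurd hrow (lt_irrefl _)
  | succ y hxy ih =>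
    have hle : g y ≤ g (y + 1) := hg.monotoneOn ⟨by omega, by omega⟩ ⟨by omega, hy⟩ y.le_succ
    by_cases hxy_row : rowOf U x < rowOf U y
    · exact (ih (by omega) hxy_row).trans_le hle
    · have hdesc : y ∈ descList U := mem_descList.2 ⟨⟨by omega, hy⟩, by omega⟩
      exact (hg.monotoneOn ⟨hx, by omega⟩ ⟨by omega, by omega⟩ hxy).trans_lt (hg.lt_succ y hdesc)

theorem entryAt_le_of_col_le (hrows : ∀ row ∈ U, row.IsChain (· ≤ ·)) {r j k : ℕ} (hjk : j ≤ k)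
    (hk : (r, k) ∈ boxes U) : entryAt U (r, j) ≤ entryAt U (r, k) := by
  have hcol := mem_boxes.1 hk
  have hr := lt_length_of_lt_length_getD hcol
  simp only [List.getD_eq_getElem _ _ hr] at hcol
  simp only [entryAt, List.getD_eq_getElem _ _ hr, List.getD_eq_getElem _ _ hcol,
    List.getD_eq_getElem _ _ (hjk.trans_lt hcol)]
  have hsorted := (List.isChain_iff_pairwise.1 (hrows _ (List.getElem_mem hr))).sortedLE
  exact hsorted.getElem_le_getElem_of_le hjk

theorem IsCompatible.stdFill_mapEntries (hU : IsStandardF U)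
    (hrows : ∀ row ∈ U, row.IsChain (· ≤ ·)) (hg : IsCompatible U g) :
    stdFill (mapEntries g U) = U := by
  refine (stdFill_eq_iff hU (map_length_mapEntries g U)).2 fun b hb b' hb' hlt => ?_
  have hmem := hU.entryAt_mem_Icc hb
  have hmem' := hU.entryAt_mem_Icc hb'
  rw [beforeB_iff, entryAt_mapEntries hb, entryAt_mapEntries hb']
  have hle := hg.monotoneOn hmem hmem' hlt.le
  have hrow : b.1 < b'.1 → g (entryAt U b) < g (entryAt U b') := by
    rw [← hU.rowOf_entryAt hb, ← hU.rowOf_entryAt hb']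
    exact hg.lt_of_rowOf_lt hmem.1 hlt.le hmem'.2
  have hcol : b.1 = b'.1 → b.2 < b'.2 := by
    obtain ⟨r, j⟩ := b
    obtain ⟨s, k⟩ := b'
    rintro rfl
    by_contra hkj
    exact hlt.not_ge (entryAt_le_of_col_le hrows (not_lt.1 hkj) hb)
  omega

theorem IsStandardF.rowOf_eq (hU : IsStandardF U) {r x : ℕ} (hr : r < U.length) (hx : x ∈ U[r]) :
    rowOf U x = r := by
  obtain ⟨j, hj, rfl⟩ := List.getElem_of_mem hx
  have hbox : (r, j) ∈ boxes U := mem_boxes.2 (by simpa [hr] using hj)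
  simpa [entryAt, hr, hj] using hU.rowOf_entryAt hbox

theorem IsStandardF.pairwise_rowOf_head (hU : IsStandardF U) :
    (U.filterMap List.head?).Pairwise fun x y => rowOf U x < rowOf U y := by
  rw [List.pairwise_filterMap, List.pairwise_iff_getElem]
  intro r s hr hs hrs x hx y hy
  rwa [hU.rowOf_eq hr (List.mem_of_mem_head? hx), hU.rowOf_eq hs (List.mem_of_mem_head? hy)]

theorem filterMap_head?_mapEntries (g : ℕ → ℕ) (U : Filling) :
    (mapEntries g U).filterMap List.head? = (U.filterMap List.head?).map g := by
  simp [mapEntries, List.filterMap_map, List.map_filterMap]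

theorem IsCompatible.isCIT_mapEntries {A : Type*} {J : Sentence A} (hU : IsCIT J U)
    (hstd : IsStandardF U) (hg : IsCompatible U g) : IsCIT J (mapEntries g U) := by
  obtain ⟨hshape, hrows, hcol, -⟩ := hU
  have hmem {row : List ℕ} (hrow : row ∈ U) {x : ℕ} (hx : x ∈ row) : x ∈ Set.Icc 1 (nBoxes U) :=
    hstd.mem_flatten_iff.1 (List.mem_flatten_of_mem hrow hx)
  have hmem_head {x : ℕ} (hx : x ∈ U.filterMap List.head?) : x ∈ Set.Icc 1 (nBoxes U) := by
    obtain ⟨row, hrow, hhead⟩ := List.mem_filterMap.1 hx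
    exact hmem hrow (List.mem_of_mem_head? hhead)
  refine ⟨(map_length_mapEntries g U).trans hshape,
    List.forall_mem_map.2 fun row hrow => ?_, ?_, ?_⟩
  · refine List.isChain_iff_pairwise.2 (List.pairwise_map.2 ?_)
    exact (List.isChain_iff_pairwise.1 (hrows row hrow)).imp_of_mem fun hx hy hxy =>
      hg.monotoneOn (hmem hrow hx) (hmem hrow hy) hxy
  · rw [filterMap_head?_mapEntries]
    refine List.isChain_iff_pairwise.2 (List.pairwise_map.2 ?_)
    refine ((List.isChain_iff_pairwise.1 hcol).and hstd.pairwise_rowOf_head).imp_of_mem ?_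
    rintro x y hx hy ⟨hxy, hrow⟩
    exact hg.lt_of_rowOf_lt (hmem_head hx).1 hxy.le (hmem_head hy).2 hrow
  · intro y hy
    rw [mapEntries, ← List.map_flatten] at hy
    obtain ⟨x, hx, rfl⟩ := List.mem_map.1 hy
    exact hg.pos x (hstd.mem_flatten_iff.1 hx)

theorem isCompatible_of_stdFill_eq {f : Filling} (hU : IsStandardF U)
    (hf : f.map List.length = U.map List.length) (hpos : ∀ x ∈ f.flatten, 1 ≤ x)
    (hstd : stdFill f = U) : IsCompatible U fun x => entryAt f (boxOf U x) := by
  have hbefore {x y : ℕ} (hx : x ∈ Set.Icc 1 (nBoxes U)) (hy : y ∈ Set.Icc 1 (nBoxes U))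
      (hxy : x < y) : beforeB f (boxOf U x) (boxOf U y) :=
    (stdFill_eq_iff hU hf).1 hstd _ (hU.boxOf_mem_boxes hx) _ (hU.boxOf_mem_boxes hy)
      (by rwa [hU.entryAt_boxOf hx, hU.entryAt_boxOf hy])
  refine ⟨fun x hx => ?_, fun x hx y hy hxy => ?_, fun d hd => ?_⟩
  · exact hpos _ (entryAt_mem_flatten (boxes_congr_shape hf ▸ hU.boxOf_mem_boxes hx))
  · obtain rfl | hlt := hxy.eq_or_lt
    · exact le_rfl
    · have := beforeB_iff.1 (hbefore hx hy hlt)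
      omega
  · obtain ⟨⟨hd₁, hdn⟩, hrow⟩ := mem_descList.1 hd
    change (boxOf U d).1 < (boxOf U (d + 1)).1 at hrow
    have := beforeB_iff.1 (hbefore (y := d + 1) ⟨hd₁, hdn.le⟩ ⟨by omega, hdn⟩ (Nat.lt_add_one d))
    omega

theorem isCIT_and_stdFill_eq_iff {A : Type*} {J : Sentence A} {f : Filling} (hU : IsCIT J U)
    (hstd : IsStandardF U) :
    IsCIT J f ∧ stdFill f = U ↔ ∃ g, IsCompatible U g ∧ f = mapEntries g U := by
  constructor
  · rintro ⟨hf, hfU⟩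
    have hshape := hf.1.trans hU.1.symm
    refine ⟨_, isCompatible_of_stdFill_eq hstd hshape hf.2.2.2 hfU, ?_⟩
    exact (eq_mapEntries_iff hshape).2 fun b hb => by rw [hstd.boxOf_entryAt hb]
  · rintro ⟨g, hg, rfl⟩
    exact ⟨hg.isCIT_mapEntries hU hstd, hg.stdFill_mapEntries hstd hU.2.1⟩

end Relabelling

section TypeOfRelabelling

variable {A : Type*} {U : Filling} {g : ℕ → ℕ} {J B : Sentence A}

theorem IsBlockIndex.isCompatible_iff (hg : IsBlockIndex B g)
    (hlen : B.flatten.length = nBoxes U) :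
    IsCompatible U g ↔ ∀ d ∈ descList U, IsCut B d := by
  have hcut : ∀ d ∈ descList U, g d < g (d + 1) ↔ IsCut B d := fun d hd =>
    have hd := (mem_descList.1 hd).1
    hg.lt_succ_iff_isCut hd.1 (hd.2.trans_eq hlen.symm)
  constructor
  · exact fun h d hd => (hcut d hd).1 (h.lt_succ d hd)
  · exact fun h => ⟨hlen ▸ hg.pos, hlen ▸ hg.monotoneOn, fun d hd => (hcut d hd).2 (h d hd)⟩

variable [Inhabited A]

theorem readWord_eq_map_range' (J : Sentence A) (U : Filling) :
    readWord J U = (List.range' 1 (nBoxes U)).map (colorOf J U) := by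
  simp only [readWord, List.range'_eq_map_range, List.map_map, Function.comp_def, Nat.add_comm]

theorem IsCompatible.hasType_mapEntries_iff (hU : IsCIT J U) (hstd : IsStandardF U)
    (hg : IsCompatible U g) :
    HasType J (mapEntries g U) B ↔ B.flatten = readWord J U ∧ IsBlockIndex B g := by
  have hword (v : ℕ) : typeWord J (mapEntries g U) v =
      ((List.range' 1 (nBoxes U)).filter (fun x => g x == v)).map (colorOf J U) := by
    rw [typeWord_eq_map_colorOf hstd (hg.isCIT_mapEntries hU hstd).1 (map_length_mapEntries g U)
      (hg.stdFill_mapEntries hstd hU.2.1)]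
    congr 1
    refine List.filter_congr fun x hx => ?_
    rw [← hstd.mem_iff, hstd.mem_flatten_iff] at hx
    rw [entryAt_mapEntries (hstd.boxOf_mem_boxes hx), hstd.entryAt_boxOf hx]
  simp only [HasType, hword, map_filter_eq_iff_isBlockIndex hg.pos hg.monotoneOn,
    readWord_eq_map_range']

theorem exists_isCompatible_hasType_iff (hU : IsCIT J U) (hstd : IsStandardF U) :
    (∃ g, IsCompatible U g ∧ HasType J (mapEntries g U) B) ↔
      B.flatten = readWord J U ∧ ∀ d ∈ descList U, IsCut B d := by
  have hlen : B.flatten = readWord J U → B.flatten.length = nBoxes U := fun h => by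
    rw [h, length_readWord]
  constructor
  · rintro ⟨g, hg, hB⟩
    obtain ⟨hflat, hindex⟩ := (hg.hasType_mapEntries_iff hU hstd).1 hB
    exact ⟨hflat, (hindex.isCompatible_iff (hlen hflat)).1 hg⟩
  · rintro ⟨hflat, hcut⟩
    obtain ⟨g, hindex⟩ := exists_isBlockIndex B
    have hg := (hindex.isCompatible_iff (hlen hflat)).2 hcut
    exact ⟨g, hg, (hg.hasType_mapEntries_iff hU hstd).2 ⟨hflat, hindex⟩⟩

end TypeOfRelabelling

/-- Let `U` be a standard colored immaculate tableau of shape `J`.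
For a weak sentence `B`, there exists a colored immaculate tableau of shape `J` and
type `B` standardizing to `U` if and only if the flattening of `B` refines the colored
descent composition `co_A(U)`. -/
theorem statement1 {A : Type*} [Inhabited A] (J : Sentence A) (hJ : IsSentence J)
    (U : Filling) (hU : IsCIT J U) (hUstd : IsStandardF U) (B : Sentence A) :
    (∃ f : Filling, IsCIT J f ∧ HasType J f B ∧ stdFill f = U) ↔
      Refines (flattenWS B) (coA J U) := by
  rw [refines_coA_iff, ← exists_isCompatible_hasType_iff hU hUstd]
  constructor
  · rintro ⟨f, hf, hB, hstd⟩
    obtain ⟨g, hg, rfl⟩ := (isCIT_and_stdFill_eq_iff hU hUstd).1 ⟨hf, hstd⟩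
    exact ⟨g, hg, hB⟩
  · rintro ⟨g, hg, hB⟩
    obtain ⟨hf, hstd⟩ := (isCIT_and_stdFill_eq_iff hU hUstd).2 ⟨g, hg, rfl⟩
    exact ⟨_, hf, hB, hstd⟩

end ColoredImm
end

section
/- For every sentence J, the colored dual immaculate function expands positively into the colored monomial basis as 𝔖*_J = Σ_B K_{J,B} M_B, where the sum runs over all sentences B with |B| = |J| and K_{J,B} is the number of colored immaculate tableaux of shape J and type B. -/
open scoped BigOperators

/-!
Relabelling the entries of a tableau by a strictly increasing map `φ` with `φ 0 = 0` preserves the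
tableau conditions and replaces each variable `x_{a,i}` of its monomial by `x_{a,φ(i)}`. Any
`j_1 < ⋯ < j_k` are the values of such a `φ` at `1, …, k`, so the coefficient of
`x_{w_1,j_1} ⋯ x_{w_k,j_k}` in `𝔖*_J` equals that of `x_{w_1,1} ⋯ x_{w_k,k}`. As the `w_i` are
nonempty, the tableaux contributing to the latter are those of type `(w_1, …, w_k)`.
-/

namespace ColoredImm

section

variable {A : Type*}

theorem length_le_size {B : Sentence A} (hB : IsSentence B) : B.length ≤ size B := by
  simpa [size] using List.length_le_sum_of_one_le (B.map List.length)
    (List.forall_mem_map.2 fun w hw => List.length_pos_iff.2 (hB w hw))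

theorem length_le_size_of_mem {B : Sentence A} {w : List A} (hw : w ∈ B) : w.length ≤ size B :=
  List.le_sum_of_mem (List.mem_map_of_mem hw)

theorem finite_setOf_length_le_forall_mem {α : Type*} {S : Set α} (hS : S.Finite) (n : ℕ) :
    {l : List α | l.length ≤ n ∧ ∀ x ∈ l, x ∈ S}.Finite := by
  have := hS.to_subtype
  refine ((List.finite_length_le S n).image (List.map Subtype.val)).subset ?_
  rintro l ⟨hlen, hl⟩
  lift l to List S using hl
  exact ⟨l, by simpa using hlen, rfl⟩

theorem finite_setOf_isSentence_size_eq {S : Set A} (hS : S.Finite) (n : ℕ) :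
    {B : Sentence A | IsSentence B ∧ size B = n ∧ ∀ a ∈ B.flatten, a ∈ S}.Finite := by
  refine (finite_setOf_length_le_forall_mem (finite_setOf_length_le_forall_mem hS n) n).subset ?_
  rintro B ⟨hB, rfl, hBS⟩
  exact ⟨length_le_size hB, fun w hw =>
    ⟨length_le_size_of_mem hw, fun a ha => hBS a (List.mem_flatten_of_mem hw ha)⟩⟩

theorem getD_ne_nil_iff {B : Sentence A} (hB : IsSentence B) {i : ℕ} :
    B.getD i [] ≠ [] ↔ i < B.length := by
  by_cases hi : i < B.length
  · simpa [hi] using hB _ (List.getElem_mem hi)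
  · simp [hi]

theorem map_range'_getD {α : Type*} (l : List α) (d : α) :
    (List.range' 1 l.length).map (fun v => l.getD (v - 1) d) = l :=
  List.ext_getElem (by simp) fun i _ hi => by simp [hi]

theorem one_le_apply_iff {φ : ℕ → ℕ} (hφ : StrictMono φ) (hφ0 : φ 0 = 0) {v : ℕ} :
    1 ≤ φ v ↔ 1 ≤ v := by
  rw [Nat.one_le_iff_ne_zero, Nat.one_le_iff_ne_zero, ← hφ.injective.ne_iff (x := v), hφ0]

theorem exists_strictMono_map_range_eq {l : List ℕ} (hl : l.Pairwise (· < ·)) :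
    ∃ φ : ℕ → ℕ, StrictMono φ ∧ (List.range l.length).map φ = l := by
  refine ⟨fun i => if h : i < l.length then l[i] else l.sum + i, strictMono_nat_of_lt_succ ?_, ?_⟩
  · intro i
    rcases lt_trichotomy (i + 1) l.length with h | h | h
    · simpa [h, (Nat.lt_succ_self i).trans h] using
        List.pairwise_iff_getElem.1 hl i (i + 1) _ h (Nat.lt_succ_self i)
    · have hi : i < l.length := by omega
      have := List.le_sum_of_mem (List.getElem_mem hi)
      simp only [hi, h, lt_irrefl, dite_true, dite_false]
      omega
    · simp [show ¬ i < l.length by omega, show ¬ i + 1 < l.length by omega]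
  · exact List.ext_getElem (by simp) fun i _ hi => by simp [hi]

theorem mem_typeWord {I : Sentence A} {f : Filling} {v : ℕ} {a : A} :
    a ∈ typeWord I f v ↔ ∃ p ∈ I.zip f, (a, v) ∈ p.1.zip p.2 := by
  simp [typeWord, rowWith]

theorem mem_flatten_of_mem_typeWord {I : Sentence A} {f : Filling} {v : ℕ} {a : A}
    (ha : a ∈ typeWord I f v) : a ∈ I.flatten ∧ v ∈ f.flatten := by
  obtain ⟨⟨w, row⟩, hrow, hbox⟩ := mem_typeWord.1 ha
  exact ⟨List.mem_flatten_of_mem (List.of_mem_zip hrow).1 (List.of_mem_zip hbox).1,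
    List.mem_flatten_of_mem (List.of_mem_zip hrow).2 (List.of_mem_zip hbox).2⟩

theorem mem_flatten_of_typeWord_ne_nil {I : Sentence A} {f : Filling} {v : ℕ}
    (hv : typeWord I f v ≠ []) : v ∈ f.flatten :=
  (mem_flatten_of_mem_typeWord (List.head_mem hv)).2

theorem length_rowWith {w : List A} {row : List ℕ} (h : row.length = w.length) (v : ℕ) :
    (rowWith w row v).length = row.count v := by
  conv_rhs => rw [← List.map_snd_zip h.le]
  rw [rowWith, List.length_map, List.count, List.countP_map, List.countP_eq_length_filter]
  rfl

theorem length_typeWord {I : Sentence A} {f : Filling}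
    (h : f.map List.length = I.map List.length) (v : ℕ) :
    (typeWord I f v).length = f.flatten.count v := by
  induction I generalizing f with
  | nil => simp_all [typeWord]
  | cons w I ih =>
    obtain _ | ⟨row, f⟩ := f
    · simp at h
    · obtain ⟨hrow, hf⟩ := List.cons.inj h
      have typeWord_cons : typeWord (w :: I) (row :: f) v = typeWord I f v ++ rowWith w row v := by
        simp [typeWord]
      rw [typeWord_cons, List.length_append, ih hf, length_rowWith hrow, List.flatten_cons,
        List.count_append, add_comm]

theorem mem_monoOf_snd {I : Sentence A} {f : Filling} {v : ℕ} :
    v ∈ (monoOf I f).2 ↔ 1 ≤ v ∧ typeWord I f v ≠ [] := by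
  have hle (hv : typeWord I f v ≠ []) : v ≤ maxEntry f :=
    List.le_max_of_le (mem_flatten_of_typeWord_ne_nil hv) le_rfl
  simp only [monoOf, List.mem_filter, List.mem_map, List.mem_range, Bool.not_eq_true',
    List.isEmpty_eq_false_iff]
  constructor
  · rintro ⟨⟨u, -, rfl⟩, hv⟩
    exact ⟨Nat.le_add_left 1 u, hv⟩
  · rintro ⟨hpos, hv⟩
    exact ⟨⟨v - 1, by have := hle hv; omega, by omega⟩, hv⟩

theorem pairwise_monoOf_snd (I : Sentence A) (f : Filling) :
    (monoOf I f).2.Pairwise (· < ·) :=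
  (List.pairwise_map.2 (List.pairwise_lt_range.imp Nat.succ_lt_succ)).filter _

theorem validMono_monoOf (I : Sentence A) (f : Filling) : ValidMono (monoOf I f) := by
  refine ⟨by simp [monoOf], List.isChain_iff_pairwise.2 (pairwise_monoOf_snd I f),
    fun v hv => (mem_monoOf_snd.1 hv).1, fun w hw => ?_⟩
  obtain ⟨v, hv, rfl⟩ := List.mem_map.1 hw
  exact (mem_monoOf_snd.1 hv).2

theorem monoOf_eq_iff {I : Sentence A} {f : Filling} {ws : List (List A)} {js : List ℕ}
    (hjs : js.Pairwise (· < ·)) :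
    monoOf I f = (ws, js) ↔
      (∀ v, v ∈ js ↔ 1 ≤ v ∧ typeWord I f v ≠ []) ∧ js.map (typeWord I f) = ws := by
  constructor
  · intro h
    have hsnd : (monoOf I f).2 = js := congrArg Prod.snd h
    subst hsnd
    exact ⟨fun v => mem_monoOf_snd, congrArg Prod.fst h⟩
  · rintro ⟨hmem, rfl⟩
    have hsnd : (monoOf I f).2 = js :=
      (pairwise_monoOf_snd I f).eq_of_mem_iff hjs fun v => mem_monoOf_snd.trans (hmem v).symm
    exact Prod.ext (congrArg (List.map (typeWord I f)) hsnd) hsnd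

theorem hasType_iff_monoOf_eq {I B : Sentence A} {f : Filling} (hB : IsSentence B) :
    HasType I f B ↔ monoOf I f = (B, List.range' 1 B.length) := by
  have hmap := map_range'_getD B []
  rw [monoOf_eq_iff List.pairwise_lt_range']
  constructor
  · intro ht
    refine ⟨fun v => ?_, ?_⟩
    · rw [List.mem_range'_1]
      refine and_congr_right fun hv => ?_
      rw [ht v hv, getD_ne_nil_iff hB]
      omega
    · exact .trans (List.map_congr_left fun v hv => ht v (List.mem_range'_1.1 hv).1) hmap
  · rintro ⟨hmem, htype⟩ v hv
    by_cases hvB : v ∈ List.range' 1 B.length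
    · exact List.map_inj_left.1 (htype.trans hmap.symm) v hvB
    · have hlen : ¬ v - 1 < B.length := by
        rw [List.mem_range'_1] at hvB
        omega
      rw [not_not.1 fun h => hvB ((hmem v).2 ⟨hv, h⟩),
        not_not.1 (mt (getD_ne_nil_iff hB).1 hlen)]

theorem IsCIT.mem_monoOf_snd_iff {J : Sentence A} {f : Filling} (hf : IsCIT J f) {v : ℕ} :
    v ∈ (monoOf J f).2 ↔ v ∈ f.flatten := by
  rw [mem_monoOf_snd, ← List.length_pos_iff, length_typeWord hf.1, List.count_pos_iff,
    and_iff_right_of_imp (hf.2.2.2 v)]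

theorem IsCIT.size_monoOf_fst {J : Sentence A} {f : Filling} (hf : IsCIT J f) :
    size (monoOf J f).1 = size J := by
  have hnodup : (monoOf J f).2.Nodup := (pairwise_monoOf_snd J f).imp Nat.ne_of_lt
  have hentries : (monoOf J f).2.toFinset = f.flatten.toFinset := by
    ext v
    simp only [List.mem_toFinset, hf.mem_monoOf_snd_iff]
  calc size (monoOf J f).1
      = ((monoOf J f).2.map (f.flatten.count ·)).sum := by
        simp only [size, monoOf, List.map_map, Function.comp_def, length_typeWord hf.1]
    _ = f.flatten.length := by
        rw [← List.sum_toFinset _ hnodup, hentries, List.sum_toFinset_count_eq_length]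
    _ = size J := by rw [size, ← hf.1, List.length_flatten]

/-- The filling obtained by replacing each entry `v` by `φ v`, used to move the monomial of a
tableau to other variable indices. -/
def relabel (φ : ℕ → ℕ) (f : Filling) : Filling := f.map (List.map φ)

theorem flatten_relabel (φ : ℕ → ℕ) (f : Filling) :
    (relabel φ f).flatten = f.flatten.map φ :=
  List.map_flatten.symm

theorem relabel_injective {φ : ℕ → ℕ} (hφ : Function.Injective φ) :
    Function.Injective (relabel φ) :=
  List.map_injective_iff.2 (List.map_injective_iff.2 hφ)

theorem exists_relabel_eq {φ : ℕ → ℕ} {g : Filling} (hg : ∀ v ∈ g.flatten, v ∈ Set.range φ) :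
    ∃ f, relabel φ f = g := by
  change g ∈ Set.range (List.map (List.map φ))
  simp only [Set.range_list_map]
  exact fun row hrow v hv => hg v (List.mem_flatten_of_mem hrow hv)

theorem rowWith_map {φ : ℕ → ℕ} (hφ : Function.Injective φ) (w : List A) (row : List ℕ) (v : ℕ) :
    rowWith w (row.map φ) (φ v) = rowWith w row v := by
  have beq_iff (x : ℕ) : (φ x == φ v) = (x == v) := by
    simp only [Bool.beq_eq_decide_eq, hφ.eq_iff]
  simp [rowWith, List.zip_map_right, List.filter_map, Function.comp_def, beq_iff]

theorem typeWord_relabel {φ : ℕ → ℕ} (hφ : Function.Injective φ) (I : Sentence A) (f : Filling)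
    (v : ℕ) : typeWord I (relabel φ f) (φ v) = typeWord I f v := by
  simp [typeWord, relabel, List.zip_map_right, ← List.map_reverse, Function.comp_def,
    rowWith_map hφ]

theorem isCIT_relabel_iff {φ : ℕ → ℕ} (hφ : StrictMono φ) (hφ0 : φ 0 = 0) {J : Sentence A}
    {f : Filling} : IsCIT J (relabel φ f) ↔ IsCIT J f := by
  have shape : (relabel φ f).map List.length = f.map List.length := by
    simp [relabel, Function.comp_def]
  have firstColumn :
      (relabel φ f).filterMap List.head? = (f.filterMap List.head?).map φ := by
    simp [relabel, List.filterMap_map, List.map_filterMap]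
  have rows : (∀ row ∈ relabel φ f, row.IsChain (· ≤ ·)) ↔ ∀ row ∈ f, row.IsChain (· ≤ ·) := by
    simp only [relabel, List.forall_mem_map, List.isChain_map, hφ.le_iff_le]
  have strict : ((f.filterMap List.head?).map φ).IsChain (· < ·) ↔
      (f.filterMap List.head?).IsChain (· < ·) := by
    simp only [List.isChain_map, hφ.lt_iff_lt]
  have positive : (∀ v ∈ (relabel φ f).flatten, 1 ≤ v) ↔ ∀ v ∈ f.flatten, 1 ≤ v := by
    simp only [flatten_relabel, List.forall_mem_map, one_le_apply_iff hφ hφ0]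
  rw [IsCIT, shape, firstColumn]
  exact and_congr_right' (and_congr rows (and_congr strict positive))

theorem monoOf_relabel {φ : ℕ → ℕ} (hφ : StrictMono φ) (hφ0 : φ 0 = 0) (I : Sentence A)
    (f : Filling) : monoOf I (relabel φ f) = ((monoOf I f).1, (monoOf I f).2.map φ) := by
  refine (monoOf_eq_iff ((pairwise_monoOf_snd I f).map φ fun _ _ h => hφ h)).2 ⟨fun v => ?_, ?_⟩
  · simp only [List.mem_map, mem_monoOf_snd]
    constructor
    · rintro ⟨u, ⟨hpos, hu⟩, rfl⟩
      exact ⟨(one_le_apply_iff hφ hφ0).2 hpos, by rwa [typeWord_relabel hφ.injective]⟩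
    · rintro ⟨hpos, hv⟩
      have hmem := mem_flatten_of_typeWord_ne_nil hv
      rw [flatten_relabel] at hmem
      obtain ⟨u, -, rfl⟩ := List.mem_map.1 hmem
      rw [typeWord_relabel hφ.injective] at hv
      exact ⟨u, ⟨(one_le_apply_iff hφ hφ0).1 hpos, hv⟩, rfl⟩
  · simp [monoOf, Function.comp_def, typeWord_relabel hφ.injective]

theorem image_relabel_setOf_monoOf_eq {φ : ℕ → ℕ} (hφ : StrictMono φ) (hφ0 : φ 0 = 0)
    (J : Sentence A) (ws : List (List A)) (is : List ℕ) :
    relabel φ '' {f | IsCIT J f ∧ monoOf J f = (ws, is)} =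
      {g | IsCIT J g ∧ monoOf J g = (ws, is.map φ)} := by
  ext g
  constructor
  · rintro ⟨f, ⟨hf, hmono⟩, rfl⟩
    exact ⟨(isCIT_relabel_iff hφ hφ0).2 hf, by rw [monoOf_relabel hφ hφ0, hmono]⟩
  · rintro ⟨hg, hmono⟩
    obtain ⟨f, rfl⟩ : ∃ f, relabel φ f = g := by
      refine exists_relabel_eq fun v hv => ?_
      rw [← hg.mem_monoOf_snd_iff, hmono] at hv
      obtain ⟨u, -, hu⟩ := List.mem_map.1 hv
      exact ⟨u, hu⟩
    rw [monoOf_relabel hφ hφ0, Prod.mk.injEq] at hmono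
    exact ⟨f, ⟨(isCIT_relabel_iff hφ hφ0).1 hg,
      Prod.ext hmono.1 (List.map_injective_iff.2 hφ.injective hmono.2)⟩, rfl⟩

theorem ncard_setOf_monoOf_eq (J : Sentence A) {m : Mono A} (hm : ValidMono m) :
    {f | IsCIT J f ∧ monoOf J f = m}.ncard = KJB J m.1 := by
  obtain ⟨B, js⟩ := m
  obtain ⟨hlen : B.length = js.length, hchain, hpos, hB⟩ := hm
  have hsorted : (0 :: js).Pairwise (· < ·) :=
    List.pairwise_cons.2 ⟨hpos, List.isChain_iff_pairwise.1 hchain⟩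
  obtain ⟨φ, hφ, hmap⟩ := exists_strictMono_map_range_eq hsorted
  rw [List.length_cons, List.range_eq_range', List.range'_succ, List.map_cons, List.cons.injEq,
    zero_add, ← hlen] at hmap
  obtain ⟨hφ0, hmap⟩ := hmap
  simp only [KJB, hasType_iff_monoOf_eq hB]
  rw [← hmap, ← image_relabel_setOf_monoOf_eq hφ hφ0,
    Set.ncard_image_of_injective _ (relabel_injective hφ.injective)]

theorem dualImm_apply (J : Sentence A) (m : Mono A) :
    dualImm J m = KJB J m.1 * MQ m.1 m := by
  by_cases hm : ValidMono m
  · simp [dualImm, MQ, hm, ncard_setOf_monoOf_eq J hm]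
  · have hempty : {f | IsCIT J f ∧ monoOf J f = m} = ∅ :=
      Set.eq_empty_of_forall_notMem fun f hf => hm (hf.2 ▸ validMono_monoOf J f)
    simp [dualImm, MQ, hm, hempty]

theorem size_eq_of_KJB_ne_zero {J B : Sentence A} (hB : IsSentence B) (hK : KJB J B ≠ 0) :
    size B = size J := by
  obtain ⟨f, hf, htype⟩ := Set.nonempty_of_ncard_ne_zero hK
  rw [← hf.size_monoOf_fst, (hasType_iff_monoOf_eq hB).1 htype]

theorem flatten_subset_of_KJB_ne_zero {J B : Sentence A} (hK : KJB J B ≠ 0) :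
    B.flatten ⊆ J.flatten := by
  obtain ⟨f, -, htype⟩ := Set.nonempty_of_ncard_ne_zero hK
  intro a ha
  obtain ⟨w, hw, haw⟩ := List.mem_flatten.1 ha
  obtain ⟨i, hi, rfl⟩ := List.mem_iff_getElem.1 hw
  have hword : typeWord J f (i + 1) = B[i] := by
    simpa [hi] using htype (i + 1) (Nat.le_add_left 1 i)
  exact (mem_flatten_of_mem_typeWord (hword ▸ haw)).1

theorem finite_setOf_KJB_ne_zero (J : Sentence A) :
    {B : Sentence A | IsSentence B ∧ KJB J B ≠ 0}.Finite :=
  (finite_setOf_isSentence_size_eq (List.finite_toSet J.flatten) (size J)).subset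
    fun _ ⟨hB, hK⟩ =>
      ⟨hB, size_eq_of_KJB_ne_zero hB hK, fun _ ha => flatten_subset_of_KJB_ne_zero hK ha⟩

theorem finsum_mem_smul_MQ_apply {S : Set (Sentence A)} {c : Sentence A → ℚ}
    (hfin : (S ∩ Function.support c).Finite) (m : Mono A) :
    (∑ᶠ B ∈ S, c B • MQ B) m = S.indicator c m.1 * MQ m.1 m := by
  have hsupport : (Function.support fun B => S.indicator c B • MQ B).Finite := by
    refine hfin.subset fun B hB => ?_
    exact Set.indicator_apply_ne_zero.1 (left_ne_zero_of_smul hB)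
  simp only [finsum_mem_def, Set.indicator_smul_left]
  rw [finsum_apply hsupport, finsum_eq_single _ m.1 fun B hB => by simp [MQ, hB.symm]]
  rfl

end

/-- The colored dual immaculate function expands positively into the
colored monomial basis: `𝔖*_J = Σ_B K_{J,B} M_B`, summed over all sentences `B` with
`|B| = |J|`. -/
theorem statement3 {A : Type*} (J : Sentence A) (hJ : IsSentence J) :
    dualImm J =
      ∑ᶠ B ∈ {B : Sentence A | IsSentence B ∧ size B = size J}, (KJB J B : ℚ) • MQ B := by
  funext m
  have hfin : ({B : Sentence A | IsSentence B ∧ size B = size J} ∩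
      Function.support fun B => (KJB J B : ℚ)).Finite :=
    (finite_setOf_KJB_ne_zero J).subset fun _ ⟨⟨hB, _⟩, hK⟩ => ⟨hB, Nat.cast_ne_zero.1 hK⟩
  rw [dualImm_apply, finsum_mem_smul_MQ_apply hfin]
  by_cases hm : ValidMono m
  · rw [Set.indicator_apply_eq_self.2 fun hsize => ?_]
    by_contra hK
    exact hsize ⟨hm.2.2.2, size_eq_of_KJB_ne_zero hm.2.2.2 (Nat.cast_ne_zero.1 hK)⟩
  · simp [MQ, hm]

end ColoredImm
end
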